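/- Let s ∈ ℝ. There is a constant C = C(s, χ, ψ) > 0 such that for every F ∈ 𝒮(ℝ×ℝ²), ‖ψ(t) (ℒF)(t)‖_{X^{s,1/2,1}} ≤ C ‖F‖_{X^{s,−1/2,1}}, where ℒF(t) = U(t) F_{xy}^{-1}[ 𝒦F(t) ] with 𝒦F(t)(ξ,η) = ∫_ℝ ( e^{itτ} − e^{−|t|(ξ+η)²} ) / ( (ξ+η)² + iτ ) · F[U(−·)F(·)](τ,ξ,η) dτ; here F[U(−·)F(·)](τ,ξ,η) = F̃(τ + ξ³ + η³, ξ, η), and for t ≥ 0 one has ℒF(t) = ∫₀^t W(t−t′) F(t′) dt′. -/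

import Mathlib

/-!
Write `a = (ξ+η)²`. After the shear `τ ↦ τ + ξ³ + η³`, which straightens the dispersion relation,
the space-time Fourier transform of `ψ ℒF` at frequency `(σ, ξ, η)` is
`(2π)² ∫ k_a(σ,τ) F̃(τ,ξ,η) dτ`, where `k_a(σ,τ)` is the Fourier transform in time of
`ψ(t) (e^{itτ} - e^{-a|t|}) / (a + iτ)`. The estimate then rests on three facts.

* Kernel bound (`kernel_bound`). Integrating by parts twice on each half-line gives
  `|k_a(σ,τ)| ≲ (1+a+|τ|)⁻¹ ((1+(σ-τ)²)⁻¹ + (1+a)/((1+a)²+σ²))`, uniformly in `a > 0`. The kink of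
  `e^{-a|t|}` at the origin costs only the first-order boundary terms, because the leading ones
  cancel between the half-lines. When `|a+iτ| ≤ 1` the two exponentials are not separated.

* Dyadic summation (`dyadic_sum`, `Xnorm_le`). For `a ∼ M²`, `|σ| ∼ 2^l`, `|τ| ∼ 2^{l'}` Schur's
  test, together with the weights `⟨M²+2^l⟩^{1/2}` and `⟨M²+2^{l'}⟩^{-1/2}`, bounds the two parts of
  the kernel by `2^{-|l-l'|/2}` and by `2^{-|l-j|/2}`, where `2^j ∼ 1 + M²`. Both are summable in
  `l`, uniformly in `l'`, which is what the `ℓ¹` structure in the modulation requires. The spatial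
  frequency cutoffs play no role beyond fixing `a ∼ M²`.

* Fourier transform of `ℒF(t)` (`fxy2_Lop`). `ℒF(t)` is defined by an inverse Fourier integral, so
  one has to know that transforming back returns `e^{it(ξ³+η³)} 𝒦F(t)`. This function is integrable
  but not smooth in `(ξ,η)`. From `1/(a+iτ) = ∫_{r>0} e^{-(a+iτ)r} dr` and the representation of
  `e^{-ra}` as a Gaussian average of characters of `ξ + η`, it is the Fourier transform of a
  continuous integrable function, namely a difference of two superpositions (`heatAvg`) of diagonal
  translates of a Schwartz function; Fourier inversion applies to that function. The line
  `ξ + η = 0` is a null set and is not seen by the norms, since `φ_M(0) = 0`.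
-/

noncomputable section

open MeasureTheory
open scoped ENNReal

/-- Space-time Fourier transform `ũ(τ,ξ,η)` of a function `u(t,x,y)`. -/
def ftt (w : ℝ → ℝ → ℝ → ℂ) (τ ξ η : ℝ) : ℂ :=
  ∫ t : ℝ, ∫ x : ℝ, ∫ y : ℝ,
    Complex.exp (-Complex.I * ((t * τ + x * ξ + y * η : ℝ) : ℂ)) * w t x y

/-- Spatial Fourier transform of a function of `(x, y)`. -/
def fxy2 (f : ℝ → ℝ → ℂ) (ξ η : ℝ) : ℂ :=
  ∫ x : ℝ, ∫ y : ℝ, Complex.exp (-Complex.I * ((x * ξ + y * η : ℝ) : ℂ)) * f x y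

/-- `φ(t) = χ(t) - χ(2t)`. -/
def phiCut (χ : ℝ → ℝ) (t : ℝ) : ℝ := χ t - χ (2 * t)

/-- `φ_N(t) = φ(t/N)`. -/
def phiCutD (χ : ℝ → ℝ) (N t : ℝ) : ℝ := phiCut χ (t / N)

/-- Japanese bracket `⟨x⟩ = (1+x²)^{1/2}` raised to the power `s`. -/
def jbr (x s : ℝ) : ℝ := (1 + x ^ 2) ^ (s / 2)

/-- The `L²_{t,x,y}` norm of the dyadic piece `P_{N,M} Q_L u`, computed on the
Fourier side via Plancherel's theorem. -/
def PQLnorm (χ : ℝ → ℝ) (N M L : ℝ) (w : ℝ → ℝ → ℝ → ℂ) : ℝ≥0∞ :=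
  (∫⁻ v : ℝ × ℝ × ℝ,
      ENNReal.ofReal
        ((phiCutD χ N (Real.sqrt (v.2.1 ^ 2 + v.2.2 ^ 2)) *
            phiCutD χ M (v.2.1 + v.2.2) *
            phiCutD χ L (v.1 - v.2.1 ^ 3 - v.2.2 ^ 3)) ^ 2 *
          ‖ftt w v.1 v.2.1 v.2.2‖ ^ 2)) ^ ((1 : ℝ) / 2)

/-- The Besov-type Bourgain norm `‖u‖_{X^{s,b,1}}`. -/
def Xnorm (χ : ℝ → ℝ) (s b : ℝ) (w : ℝ → ℝ → ℝ → ℂ) : ℝ≥0∞ :=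
  (∑' n : ℤ, ∑' m : ℤ,
      (∑' l : ℤ,
          ENNReal.ofReal (jbr ((2 : ℝ) ^ n) s * jbr (((2 : ℝ) ^ m) ^ 2 + (2 : ℝ) ^ l) b) *
            PQLnorm χ ((2 : ℝ) ^ n) ((2 : ℝ) ^ m) ((2 : ℝ) ^ l) w) ^ 2) ^ ((1 : ℝ) / 2)


/-- The operator `𝒦`: for a function `F(t,x,y)`,
`𝒦F(t)(ξ,η) = ∫ (e^{itτ} - e^{-|t|(ξ+η)²}) / ((ξ+η)² + iτ) · F[U(-·)F(·)](τ,ξ,η) dτ`,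
where `F[U(-·)F(·)](τ,ξ,η) = F̃(τ+ξ³+η³,ξ,η)`. -/
def Kop (F : ℝ → ℝ → ℝ → ℂ) (t ξ η : ℝ) : ℂ :=
  ∫ τ : ℝ,
    ((Complex.exp (Complex.I * ((t * τ : ℝ) : ℂ)) -
        Complex.exp (((-|t| * (ξ + η) ^ 2 : ℝ) : ℂ))) /
      ((((ξ + η) ^ 2 : ℝ) : ℂ) + Complex.I * (τ : ℂ))) *
      ftt F (τ + ξ ^ 3 + η ^ 3) ξ η

/-- The Duhamel-type operator `ℒF(t) = U(t) F_{xy}^{-1}[𝒦F(t)]`, written via the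
Fourier inversion formula (normalization constant absorbed in `C`); for `t ≥ 0`
it equals `∫₀ᵗ W(t-t') F(t') dt'`. -/
def Lop (F : ℝ → ℝ → ℝ → ℂ) (t x y : ℝ) : ℂ :=
  ∫ ξ : ℝ, ∫ η : ℝ,
    Complex.exp (Complex.I * ((t * (ξ ^ 3 + η ^ 3) + x * ξ + y * η : ℝ) : ℂ)) * Kop F t ξ η

/-! ### Integration by parts on a half-line -/

/-- Two integrations by parts on a half-line: only the boundary terms at `0` survive. -/
lemma half_ibp (σ : ℝ) (v v' v'' : ℝ → ℂ) (hv : ∀ t, HasDerivAt v (v' t) t)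
    (hv' : ∀ t, HasDerivAt v' (v'' t) t) (hc : Continuous v'') (h3 : v 3 = 0) (h3' : v' 3 = 0) :
    (σ : ℂ) ^ 2 * ∫ t in (0 : ℝ)..3, Complex.exp (-Complex.I * ((t * σ : ℝ) : ℂ)) * v t =
      -(Complex.I * σ * v 0) - v' 0 -
        ∫ t in (0 : ℝ)..3, Complex.exp (-Complex.I * ((t * σ : ℝ) : ℂ)) * v'' t := by
  have cv : Continuous v := continuous_iff_continuousAt.2 fun t => (hv t).continuousAt
  have he : ∀ t : ℝ, HasDerivAt (fun t : ℝ => Complex.exp (-Complex.I * ((t * σ : ℝ) : ℂ)))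
      (Complex.exp (-Complex.I * ((t * σ : ℝ) : ℂ)) * (-Complex.I * σ)) t := by
    intro t
    have h1 : HasDerivAt (fun t : ℝ => ((t * σ : ℝ) : ℂ)) (σ : ℂ) t := by
      simpa using ((hasDerivAt_id t).mul_const σ).ofReal_comp
    exact (h1.const_mul (-Complex.I)).cexp
  have hd : ∀ t : ℝ, HasDerivAt
      (fun t : ℝ => Complex.exp (-Complex.I * ((t * σ : ℝ) : ℂ)) * (Complex.I * σ * v t + v' t))
      ((σ : ℂ) ^ 2 * (Complex.exp (-Complex.I * ((t * σ : ℝ) : ℂ)) * v t) +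
        Complex.exp (-Complex.I * ((t * σ : ℝ) : ℂ)) * v'' t) t := by
    intro t
    have := (he t).mul (((hv t).const_mul (Complex.I * σ)).add (hv' t))
    refine this.congr_deriv ?_
    simp only [Pi.add_apply]
    linear_combination (-(σ:ℂ)^2 * v t * Complex.exp (-Complex.I * ((t * σ : ℝ) : ℂ))) * Complex.I_sq
  have hint := intervalIntegral.integral_eq_sub_of_hasDerivAt (a := 0) (b := 3)
    (fun t _ => hd t) (Continuous.intervalIntegrable (by fun_prop) _ _)
  rw [intervalIntegral.integral_add (Continuous.intervalIntegrable (by fun_prop) _ _)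
    (Continuous.intervalIntegrable (by fun_prop) _ _), intervalIntegral.integral_const_mul,
    h3, h3'] at hint
  simp only [mul_zero, add_zero, zero_mul, Complex.ofReal_zero, Complex.exp_zero, one_mul] at hint
  linear_combination hint

lemma norm_exp_negI (x : ℝ) : ‖Complex.exp (-Complex.I * (x : ℂ))‖ = 1 := by
  rw [show -Complex.I * (x : ℂ) = ((-x : ℝ) : ℂ) * Complex.I by push_cast; ring]
  exact Complex.norm_exp_ofReal_mul_I _

lemma norm_exp_posI (x : ℝ) : ‖Complex.exp (Complex.I * (x : ℂ))‖ = 1 := by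
  rw [mul_comm]; exact Complex.norm_exp_ofReal_mul_I _

/-- Bounds on one half-line for a cutoff `θ` times a profile `e`. -/
lemma half_product (B : ℝ) (θ θ' θ'' : ℝ → ℝ) (hθ : ∀ t, HasDerivAt θ (θ' t) t)
    (hθ' : ∀ t, HasDerivAt θ' (θ'' t) t) (hcθ : Continuous θ'')
    (b0 : ∀ t, |θ t| ≤ B) (b1 : ∀ t, |θ' t| ≤ B) (b2 : ∀ t, |θ'' t| ≤ B)
    (z0 : θ 3 = 0) (z1 : θ' 3 = 0)
    (e e' e'' : ℝ → ℂ) (he : ∀ t, HasDerivAt e (e' t) t)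
    (he' : ∀ t, HasDerivAt e' (e'' t) t) (hce : Continuous e'')
    (e0 e1 e2 β0 β1 : ℝ) (he0 : ∫ t in (0 : ℝ)..3, ‖e t‖ ≤ e0)
    (he1 : ∫ t in (0 : ℝ)..3, ‖e' t‖ ≤ e1) (he2 : ∫ t in (0 : ℝ)..3, ‖e'' t‖ ≤ e2)
    (hβ0 : ‖e 0‖ ≤ β0) (hβ1 : ‖e' 0‖ ≤ β1) (σ : ℝ) :
    ‖∫ t in (0 : ℝ)..3, Complex.exp (-Complex.I * ((t * σ : ℝ) : ℂ)) * ((θ t : ℂ) * e t)‖ ≤ B * e0 ∧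
    ‖(σ : ℂ) ^ 2 * (∫ t in (0 : ℝ)..3,
        Complex.exp (-Complex.I * ((t * σ : ℝ) : ℂ)) * ((θ t : ℂ) * e t)) +
        Complex.I * σ * (θ 0 * e 0)‖ ≤
      B * (β0 + β1 + (e0 + 2 * e1 + e2)) := by
  have hB : 0 ≤ B := (abs_nonneg _).trans (b0 0)
  have ce : Continuous e := continuous_iff_continuousAt.2 fun t => (he t).continuousAt
  have ce' : Continuous e' := continuous_iff_continuousAt.2 fun t => (he' t).continuousAt
  have cθ : Continuous θ := continuous_iff_continuousAt.2 fun t => (hθ t).continuousAt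
  have cθ' : Continuous θ' := continuous_iff_continuousAt.2 fun t => (hθ' t).continuousAt
  have key : ∀ g : ℝ → ℂ, ∀ h : ℝ → ℝ, Continuous h → (∀ t, ‖g t‖ ≤ h t) →
      ‖∫ t in (0 : ℝ)..3, Complex.exp (-Complex.I * ((t * σ : ℝ) : ℂ)) * g t‖ ≤
        ∫ t in (0 : ℝ)..3, h t := by
    intro g h hc hgh
    refine intervalIntegral.norm_integral_le_of_norm_le (by norm_num) ?_
      (hc.intervalIntegrable _ _)
    refine Filter.Eventually.of_forall fun t _ => ?_
    rw [norm_mul, norm_exp_negI, one_mul]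
    exact hgh t
  constructor
  · refine (key _ (fun t => B * ‖e t‖) (by fun_prop) fun t => ?_).trans ?_
    · rw [norm_mul, Complex.norm_real]
      exact mul_le_mul_of_nonneg_right (b0 t) (norm_nonneg _)
    · rw [intervalIntegral.integral_const_mul]
      exact mul_le_mul_of_nonneg_left he0 hB
  · have hv : ∀ t, HasDerivAt (fun t => (θ t : ℂ) * e t) ((θ' t : ℂ) * e t + θ t * e' t) t :=
      fun t => (hθ t).ofReal_comp.mul (he t)
    have hv' : ∀ t, HasDerivAt (fun t => (θ' t : ℂ) * e t + θ t * e' t)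
        (((θ'' t : ℂ) * e t + θ' t * e' t) + ((θ' t : ℂ) * e' t + θ t * e'' t)) t :=
      fun t => ((hθ' t).ofReal_comp.mul (he t)).add ((hθ t).ofReal_comp.mul (he' t))
    have hib := half_ibp σ _ _ _ hv hv' (by fun_prop) (by simp [z0]) (by simp [z0, z1])
    rw [hib]
    have h2 := key (fun t => ((θ'' t : ℂ) * e t + θ' t * e' t) + ((θ' t : ℂ) * e' t + θ t * e'' t))
      (fun t => B * (‖e t‖ + 2 * ‖e' t‖ + ‖e'' t‖)) (by fun_prop) (by
        intro t
        have n0 : ‖(θ t : ℂ) * e'' t‖ ≤ B * ‖e'' t‖ := by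
          rw [norm_mul, Complex.norm_real]
          exact mul_le_mul_of_nonneg_right (b0 t) (norm_nonneg _)
        have n1 : ‖(θ' t : ℂ) * e' t‖ ≤ B * ‖e' t‖ := by
          rw [norm_mul, Complex.norm_real]
          exact mul_le_mul_of_nonneg_right (b1 t) (norm_nonneg _)
        have n2 : ‖(θ'' t : ℂ) * e t‖ ≤ B * ‖e t‖ := by
          rw [norm_mul, Complex.norm_real]
          exact mul_le_mul_of_nonneg_right (b2 t) (norm_nonneg _)
        refine (norm_add_le _ _).trans ?_
        have := norm_add_le ((θ'' t : ℂ) * e t) (θ' t * e' t)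
        have := norm_add_le ((θ' t : ℂ) * e' t) (θ t * e'' t)
        linarith)
    rw [intervalIntegral.integral_const_mul, intervalIntegral.integral_add
      (Continuous.intervalIntegrable (by fun_prop) _ _)
      (Continuous.intervalIntegrable (by fun_prop) _ _), intervalIntegral.integral_add
      (Continuous.intervalIntegrable (by fun_prop) _ _)
      (Continuous.intervalIntegrable (by fun_prop) _ _), intervalIntegral.integral_const_mul] at h2
    have h3 : ‖(θ' 0 : ℂ) * e 0 + θ 0 * e' 0‖ ≤ B * β0 + B * β1 := by
      refine (norm_add_le _ _).trans ?_
      rw [norm_mul, norm_mul, Complex.norm_real, Complex.norm_real]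
      exact add_le_add (mul_le_mul (b1 0) hβ0 (norm_nonneg _) hB)
        (mul_le_mul (b0 0) hβ1 (norm_nonneg _) hB)
    have h4 : B * ((∫ t in (0 : ℝ)..3, ‖e t‖) + 2 * (∫ t in (0 : ℝ)..3, ‖e' t‖) +
        ∫ t in (0 : ℝ)..3, ‖e'' t‖) ≤ B * (e0 + 2 * e1 + e2) :=
      mul_le_mul_of_nonneg_left (by linarith) hB
    have h5 := norm_add_le (-((θ' 0 : ℂ) * e 0 + θ 0 * e' 0))
      (-∫ t in (0 : ℝ)..3, Complex.exp (-Complex.I * ((t * σ : ℝ) : ℂ)) *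
        (((θ'' t : ℂ) * e t + θ' t * e' t) + ((θ' t : ℂ) * e' t + θ t * e'' t)))
    rw [norm_neg, norm_neg] at h5
    refine le_trans (le_of_eq ?_) (h5.trans ?_)
    · congr 1; ring
    · linarith

/-- `∫_ℝ e^{-iσt} u(t) dt` for `u` supported in `[-3,3]`, split at the origin. -/
lemma split_integral (u : ℝ → ℂ) (hu : Continuous u) (hs : ∀ t, 3 ≤ |t| → u t = 0) (σ : ℝ) :
    ∫ t : ℝ, Complex.exp (-Complex.I * ((t * σ : ℝ) : ℂ)) * u t =
      (∫ t in (0 : ℝ)..3, Complex.exp (-Complex.I * ((t * σ : ℝ) : ℂ)) * u t) +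
      ∫ t in (0 : ℝ)..3, Complex.exp (-Complex.I * ((t * (-σ) : ℝ) : ℂ)) * u (-t) := by
  have h1 : ∫ t : ℝ, Complex.exp (-Complex.I * ((t * σ : ℝ) : ℂ)) * u t =
      ∫ t in (-3 : ℝ)..3, Complex.exp (-Complex.I * ((t * σ : ℝ) : ℂ)) * u t := by
    rw [intervalIntegral.integral_of_le (by norm_num)]
    symm
    apply setIntegral_eq_integral_of_forall_compl_eq_zero
    intro t ht
    have : 3 ≤ |t| := by
      by_contra h
      rw [not_le, abs_lt] at h
      exact ht ⟨h.1, h.2.le⟩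
    rw [hs t this, mul_zero]
  have h2 : ∫ t in (0 : ℝ)..3, Complex.exp (-Complex.I * ((t * (-σ) : ℝ) : ℂ)) * u (-t) =
      ∫ t in (-3 : ℝ)..0, Complex.exp (-Complex.I * ((t * σ : ℝ) : ℂ)) * u t := by
    have := intervalIntegral.integral_comp_neg (a := 0) (b := 3)
      (fun t : ℝ => Complex.exp (-Complex.I * ((t * σ : ℝ) : ℂ)) * u t)
    rw [neg_zero] at this
    rw [← this]
    congr 1; ext t; congr 4; ring
  rw [h1, h2, add_comm, intervalIntegral.integral_add_adjacent_intervals] <;>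
  exact Continuous.intervalIntegrable (by fun_prop) _ _

/-! ### Two-sided profiles -/

/-- Decay in `σ` of the Fourier transform of `ψ` times a two-sided profile. -/
lemma two_sided_bound (B : ℝ) (ψ ψ' ψ'' : ℝ → ℝ) (hθ : ∀ t, HasDerivAt ψ (ψ' t) t)
    (hθ' : ∀ t, HasDerivAt ψ' (ψ'' t) t) (hcθ : Continuous ψ'')
    (b0 : ∀ t, |ψ t| ≤ B) (b1 : ∀ t, |ψ' t| ≤ B) (b2 : ∀ t, |ψ'' t| ≤ B)
    (z0 : ∀ t, 3 ≤ |t| → ψ t = 0) (z1 : ∀ t, 3 ≤ |t| → ψ' t = 0)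
    (e p p' p'' n n' n'' : ℝ → ℂ) (hce : Continuous e)
    (hp : ∀ t, HasDerivAt p (p' t) t)
    (hp' : ∀ t, HasDerivAt p' (p'' t) t) (hcp : Continuous p'')
    (hn : ∀ t, HasDerivAt n (n' t) t)
    (hn' : ∀ t, HasDerivAt n' (n'' t) t) (hcn : Continuous n'')
    (hep : ∀ t, 0 ≤ t → e t = p t) (hen : ∀ t, 0 ≤ t → e (-t) = n t)
    (e0 e1 e2 β0 β1 : ℝ) (hp0 : ∫ t in (0 : ℝ)..3, ‖p t‖ ≤ e0)
    (hp1 : ∫ t in (0 : ℝ)..3, ‖p' t‖ ≤ e1) (hp2 : ∫ t in (0 : ℝ)..3, ‖p'' t‖ ≤ e2)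
    (hpβ0 : ‖p 0‖ ≤ β0) (hpβ1 : ‖p' 0‖ ≤ β1)
    (hn0 : ∫ t in (0 : ℝ)..3, ‖n t‖ ≤ e0)
    (hn1 : ∫ t in (0 : ℝ)..3, ‖n' t‖ ≤ e1) (hn2 : ∫ t in (0 : ℝ)..3, ‖n'' t‖ ≤ e2)
    (hnβ0 : ‖n 0‖ ≤ β0) (hnβ1 : ‖n' 0‖ ≤ β1) (σ : ℝ) :
    ‖∫ t : ℝ, Complex.exp (-Complex.I * ((t * σ : ℝ) : ℂ)) * ((ψ t : ℂ) * e t)‖ ≤ 2 * B * e0 ∧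
    σ ^ 2 * ‖∫ t : ℝ, Complex.exp (-Complex.I * ((t * σ : ℝ) : ℂ)) * ((ψ t : ℂ) * e t)‖ ≤
      2 * B * (β0 + β1 + (e0 + 2 * e1 + e2)) := by
  have cψ : Continuous ψ := continuous_iff_continuousAt.2 fun t => (hθ t).continuousAt
  have h3 : (3 : ℝ) ≤ |3| := le_abs_self _
  have h3' : (3 : ℝ) ≤ |-3| := by simp
  have hr : ∀ t, HasDerivAt (fun t => ψ (-t)) (-ψ' (-t)) t := fun t => by
    simpa [Function.comp_def] using (hθ (-t)).comp t (hasDerivAt_neg t)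
  have hr' : ∀ t, HasDerivAt (fun t => -ψ' (-t)) (ψ'' (-t)) t := fun t => by
    simpa [Function.comp_def] using ((hθ' (-t)).comp t (hasDerivAt_neg t)).fun_neg
  have P := half_product B ψ ψ' ψ'' hθ hθ' hcθ b0 b1 b2 (z0 3 h3) (z1 3 h3) p p' p'' hp hp' hcp
    e0 e1 e2 β0 β1 hp0 hp1 hp2 hpβ0 hpβ1 σ
  have N := half_product B (fun t => ψ (-t)) (fun t => -ψ' (-t)) (fun t => ψ'' (-t)) hr hr'
    (by fun_prop) (fun t => b0 _) (fun t => by rw [abs_neg]; exact b1 _) (fun t => b2 _)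
    (z0 (-3) h3') (by rw [z1 (-3) h3', neg_zero]) n n' n'' hn hn' hcn
    e0 e1 e2 β0 β1 hn0 hn1 hn2 hnβ0 hnβ1 (-σ)
  have hsplit := split_integral (fun t => (ψ t : ℂ) * e t) (by fun_prop)
    (fun t ht => by rw [z0 t ht]; simp) σ
  have e1' : ∫ t in (0 : ℝ)..3, Complex.exp (-Complex.I * ((t * σ : ℝ) : ℂ)) * ((ψ t : ℂ) * e t) =
      ∫ t in (0 : ℝ)..3, Complex.exp (-Complex.I * ((t * σ : ℝ) : ℂ)) * ((ψ t : ℂ) * p t) := by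
    refine intervalIntegral.integral_congr fun t ht => ?_
    rw [Set.uIcc_of_le (by norm_num)] at ht
    simp only [hep t ht.1]
  have e2' : ∫ t in (0 : ℝ)..3,
        Complex.exp (-Complex.I * ((t * (-σ) : ℝ) : ℂ)) * ((ψ (-t) : ℂ) * e (-t)) =
      ∫ t in (0 : ℝ)..3,
        Complex.exp (-Complex.I * ((t * (-σ) : ℝ) : ℂ)) * ((ψ (-t) : ℂ) * n t) := by
    refine intervalIntegral.integral_congr fun t ht => ?_
    rw [Set.uIcc_of_le (by norm_num)] at ht
    simp only [hen t ht.1]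
  -- the two profiles agree at `0`, so the `O(σ)` boundary terms of the half-lines cancel
  have h00 : p 0 = n 0 := by rw [← hep 0 le_rfl, ← hen 0 le_rfl, neg_zero]
  rw [e1', e2'] at hsplit
  rw [hsplit]
  constructor
  · refine (norm_add_le _ _).trans ?_
    linarith [P.1, N.1]
  · have hsq : σ ^ 2 = ‖(σ : ℂ) ^ 2‖ := by
      rw [norm_pow, Complex.norm_real, Real.norm_eq_abs, sq_abs]
    rw [hsq, ← norm_mul, mul_add]
    have P2 := P.2
    have N2 := N.2
    have := norm_add_le _ _ |>.trans (add_le_add P2 N2)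
    refine le_trans (le_of_eq ?_) (this.trans (le_of_eq (by ring)))
    congr 1
    rw [h00]
    push_cast
    simp only [neg_zero]
    ring

lemma integral_exp_neg_le (a : ℝ) (ha : 0 ≤ a) :
    ∫ t in (0 : ℝ)..3, Real.exp (-a * t) ≤ 4 / (1 + a) := by
  rw [le_div_iff₀ (by linarith), mul_add, mul_one]
  have h1 : ∫ t in (0 : ℝ)..3, Real.exp (-a * t) ≤ 3 := by
    have := intervalIntegral.integral_mono_on (a := 0) (b := 3) (μ := volume)
      (f := fun t => Real.exp (-a * t)) (g := fun _ => 1) (by norm_num)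
      (Continuous.intervalIntegrable (by fun_prop) _ _)
      (Continuous.intervalIntegrable (by fun_prop) _ _) (fun t ht => by
        rw [Real.exp_le_one_iff]; nlinarith [ht.1])
    simpa using this
  have h2 : (∫ t in (0 : ℝ)..3, Real.exp (-a * t)) * a ≤ 1 := by
    rw [← intervalIntegral.integral_mul_const]
    have := intervalIntegral.integral_eq_sub_of_hasDerivAt (a := 0) (b := 3)
      (f := fun t => -Real.exp (-a * t)) (f' := fun t => Real.exp (-a * t) * a)
      (fun t _ => by
        have := (((hasDerivAt_id t).const_mul (-a)).exp).fun_neg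
        simpa using this) (Continuous.intervalIntegrable (by fun_prop) _ _)
    rw [this]
    simp [Real.exp_nonneg]
  linarith

lemma hasDerivAt_exp_I (τ t : ℝ) :
    HasDerivAt (fun t : ℝ => Complex.exp (Complex.I * ((t * τ : ℝ) : ℂ)))
      (Complex.I * τ * Complex.exp (Complex.I * ((t * τ : ℝ) : ℂ))) t := by
  have h1 : HasDerivAt (fun t : ℝ => ((t * τ : ℝ) : ℂ)) (τ : ℂ) t := by
    simpa using ((hasDerivAt_id t).mul_const τ).ofReal_comp
  refine (h1.const_mul Complex.I).cexp.congr_deriv ?_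
  ring

lemma hasDerivAt_exp_neg (a t : ℝ) :
    HasDerivAt (fun t : ℝ => Complex.exp ((-a * t : ℝ) : ℂ))
      (-a * Complex.exp ((-a * t : ℝ) : ℂ)) t := by
  have h1 : HasDerivAt (fun t : ℝ => ((-a * t : ℝ) : ℂ)) (-a : ℂ) t := by
    simpa using ((hasDerivAt_id t).const_mul (-a)).ofReal_comp
  refine h1.cexp.congr_deriv ?_
  ring

lemma norm_exp_neg (a t : ℝ) : ‖Complex.exp ((-a * t : ℝ) : ℂ)‖ = Real.exp (-a * t) := by
  rw [Complex.norm_exp]; simp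

/-- `|e^{itτ} - e^{-|t|a}| ≤ |t| |a + iτ|` for `a ≥ 0`: the singularity of the multiplier at
`a + iτ = 0` is removable. -/
lemma norm_exp_sub_le (a τ t : ℝ) (ha : 0 ≤ a) :
    ‖Complex.exp (Complex.I * ((t * τ : ℝ) : ℂ)) - Complex.exp (((-|t| * a : ℝ) : ℂ))‖ ≤
      |t| * ‖(a : ℂ) + Complex.I * τ‖ := by
  have main : ∀ τ t : ℝ, 0 ≤ t →
      ‖Complex.exp (Complex.I * ((t * τ : ℝ) : ℂ)) - Complex.exp (((-a * t : ℝ) : ℂ))‖ ≤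
      t * ‖(a : ℂ) + Complex.I * τ‖ := by
    intro τ t ht
    -- mean value inequality for `1 - e^{-(a + iτ) t}`, whose derivative is at most `|a + iτ|`
    have h := (convex_Icc (0 : ℝ) t).norm_image_sub_le_of_norm_hasDerivWithin_le
      (f := fun r : ℝ => Complex.exp (-((a : ℂ) + Complex.I * τ) * (r : ℂ)))
      (f' := fun r : ℝ => Complex.exp (-((a : ℂ) + Complex.I * τ) * (r : ℂ)) *
        (-((a : ℂ) + Complex.I * τ))) (C := ‖(a : ℂ) + Complex.I * τ‖) (x := 0) (y := t)
      (fun r _ => by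
        have h1 : HasDerivAt (fun r : ℝ => (r : ℂ)) 1 r := Complex.ofRealCLM.hasDerivAt
        have := (h1.const_mul (-((a : ℂ) + Complex.I * τ))).cexp
        rw [mul_one] at this
        exact this.hasDerivWithinAt)
      (fun r hr => by
        rw [norm_mul, norm_neg, Complex.norm_exp]
        refine mul_le_of_le_one_left (norm_nonneg _) ?_
        rw [Real.exp_le_one_iff]
        simp
        exact mul_nonneg ha hr.1)
      (by simp [ht]) (by simp [ht])
    simp only [Complex.ofReal_zero, mul_zero, Complex.exp_zero, sub_zero, Real.norm_eq_abs,
      abs_of_nonneg ht] at h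
    have hfac : Complex.exp (Complex.I * ((t * τ : ℝ) : ℂ)) - Complex.exp (((-a * t : ℝ) : ℂ)) =
        -(Complex.exp (Complex.I * ((t * τ : ℝ) : ℂ)) *
          (Complex.exp (-((a : ℂ) + Complex.I * τ) * (t : ℂ)) - 1)) := by
      rw [mul_sub, ← Complex.exp_add, mul_one, neg_sub]
      congr 2
      push_cast
      ring
    rw [hfac, norm_neg, norm_mul, norm_exp_posI, one_mul, mul_comm t]
    exact h
  rcases le_total 0 t with ht | ht
  · have := main τ t ht
    rwa [abs_of_nonneg ht, show -t * a = -a * t by ring]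
  · have := main (-τ) (-t) (by linarith)
    have hn : ‖(a : ℂ) + Complex.I * ((-τ : ℝ) : ℂ)‖ = ‖(a : ℂ) + Complex.I * τ‖ := by
      rw [← Complex.norm_conj]
      simp
    rw [hn, show -t * -τ = t * τ by ring] at this
    rwa [abs_of_nonpos ht, show - -t * a = -a * -t by ring]

/-! ### The kernel bound -/

/-- A twice continuously differentiable cutoff `ψ`, supported in `(-3,3)`, with derivatives
`ψ'`, `ψ''`, all bounded by `B`. -/
structure IsCutoff (B : ℝ) (ψ ψ' ψ'' : ℝ → ℝ) : Prop where
  d1 : ∀ t, HasDerivAt ψ (ψ' t) t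
  d2 : ∀ t, HasDerivAt ψ' (ψ'' t) t
  cont : Continuous ψ''
  b0 : ∀ t, |ψ t| ≤ B
  b1 : ∀ t, |ψ' t| ≤ B
  b2 : ∀ t, |ψ'' t| ≤ B
  z0 : ∀ t, 3 ≤ |t| → ψ t = 0
  z1 : ∀ t, 3 ≤ |t| → ψ' t = 0

lemma IsCutoff.continuous {B : ℝ} {ψ ψ' ψ'' : ℝ → ℝ} (h : IsCutoff B ψ ψ' ψ'') : Continuous ψ :=
  continuous_iff_continuousAt.2 fun t => (h.d1 t).continuousAt

lemma exists_isCutoff (ψ : ℝ → ℝ) (hψ_smooth : ContDiff ℝ (⊤ : ℕ∞) ψ)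
    (hψ_supp : Function.support ψ ⊆ Set.Icc (-2) 2) :
    ∃ B ψ' ψ'', IsCutoff B ψ ψ' ψ'' := by
  have hcs : HasCompactSupport ψ :=
    HasCompactSupport.of_support_subset_isCompact isCompact_Icc hψ_supp
  have h1 : ContDiff ℝ (⊤ : ℕ∞) (deriv ψ) := by
    have := hψ_smooth.iterate_deriv 1
    simpa using this
  have h2 : ContDiff ℝ (⊤ : ℕ∞) (deriv (deriv ψ)) := by
    have := h1.iterate_deriv 1
    simpa using this
  obtain ⟨B0, hB0⟩ := hcs.exists_bound_of_continuous hψ_smooth.continuous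
  obtain ⟨B1, hB1⟩ := hcs.deriv.exists_bound_of_continuous h1.continuous
  obtain ⟨B2, hB2⟩ := hcs.deriv.deriv.exists_bound_of_continuous h2.continuous
  refine ⟨max B0 (max B1 B2), deriv ψ, deriv (deriv ψ), ?_, ?_, h2.continuous, ?_, ?_, ?_, ?_, ?_⟩
  · exact fun t => (hψ_smooth.differentiable (by simp) t).hasDerivAt
  · exact fun t => (h1.differentiable (by simp) t).hasDerivAt
  · exact fun t => (hB0 t).trans (le_max_left _ _)
  · exact fun t => (hB1 t).trans ((le_max_left _ _).trans (le_max_right _ _))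
  · exact fun t => (hB2 t).trans ((le_max_right _ _).trans (le_max_right _ _))
  · intro t ht
    by_contra h
    have := hψ_supp h
    have := abs_le.2 ⟨this.1, this.2⟩
    linarith
  · intro t ht
    by_contra h
    have := closure_minimal hψ_supp isClosed_Icc (support_deriv_subset (𝕜 := ℝ) h)
    have := abs_le.2 ⟨this.1, this.2⟩
    linarith

/-- The Fourier transform of `ψ(t) e^{-a|t|}` is `O(⟨a⟩ / (⟨a⟩² + σ²))`, uniformly in `a ≥ 0`. -/
lemma exp_profile_bound {B : ℝ} {ψ ψ' ψ'' : ℝ → ℝ} (h : IsCutoff B ψ ψ' ψ'') (a : ℝ)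
    (ha : 0 ≤ a) (σ : ℝ) :
    ‖∫ t : ℝ, Complex.exp (-Complex.I * ((t * σ : ℝ) : ℂ)) *
      ((ψ t : ℂ) * Complex.exp (((-|t| * a : ℝ) : ℂ)))‖ ≤
      34 * B * ((1 + a) / ((1 + a) ^ 2 + σ ^ 2)) := by
  have hB : 0 ≤ B := (abs_nonneg _).trans (h.b0 0)
  have hE := integral_exp_neg_le a ha
  have hE0 : 0 ≤ ∫ t in (0 : ℝ)..3, Real.exp (-a * t) :=
    intervalIntegral.integral_nonneg (by norm_num) fun t _ => (Real.exp_pos _).le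
  have hd : 4 / (1 + a) * (1 + a) = 4 := div_mul_cancel₀ _ (by linarith)
  have hd0 : 0 ≤ 4 / (1 + a) := by positivity
  have i0 : ∫ t in (0 : ℝ)..3, ‖Complex.exp ((-a * t : ℝ) : ℂ)‖ ≤ 4 / (1 + a) := by
    simpa only [norm_exp_neg] using hE
  have i1 : ∫ t in (0 : ℝ)..3, ‖-a * Complex.exp ((-a * t : ℝ) : ℂ)‖ ≤ 4 := by
    simp only [norm_mul, norm_neg, norm_exp_neg, Complex.norm_real, Real.norm_eq_abs,
      abs_of_nonneg ha]
    rw [intervalIntegral.integral_const_mul]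
    nlinarith
  have i2 : ∫ t in (0 : ℝ)..3, ‖-a * (-a * Complex.exp ((-a * t : ℝ) : ℂ))‖ ≤ 4 * a := by
    simp only [norm_mul, norm_neg, norm_exp_neg, Complex.norm_real, Real.norm_eq_abs,
      abs_of_nonneg ha]
    rw [intervalIntegral.integral_const_mul, intervalIntegral.integral_const_mul]
    nlinarith [mul_nonneg ha ha]
  have T := two_sided_bound B ψ ψ' ψ'' h.d1 h.d2 h.cont h.b0 h.b1 h.b2 h.z0 h.z1
    (fun t => Complex.exp (((-|t| * a : ℝ) : ℂ)))
    (fun t => Complex.exp ((-a * t : ℝ) : ℂ)) (fun t => -a * Complex.exp ((-a * t : ℝ) : ℂ))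
    (fun t => -a * (-a * Complex.exp ((-a * t : ℝ) : ℂ)))
    (fun t => Complex.exp ((-a * t : ℝ) : ℂ)) (fun t => -a * Complex.exp ((-a * t : ℝ) : ℂ))
    (fun t => -a * (-a * Complex.exp ((-a * t : ℝ) : ℂ)))
    (by fun_prop) (hasDerivAt_exp_neg a)
    (fun t => (hasDerivAt_exp_neg a t).const_mul _) (by fun_prop)
    (hasDerivAt_exp_neg a) (fun t => (hasDerivAt_exp_neg a t).const_mul _) (by fun_prop)
    (fun t ht => by rw [abs_of_nonneg ht, show -t * a = -a * t by ring])
    (fun t ht => by rw [abs_neg, abs_of_nonneg ht, show -t * a = -a * t by ring])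
    (4 / (1 + a)) 4 (4 * a) 1 a i0 i1 i2 (by simp) (by simp [abs_of_nonneg ha])
    i0 i1 i2 (by simp) (by simp [abs_of_nonneg ha]) σ
  obtain ⟨T1, T2⟩ := T
  set X := ‖∫ t : ℝ, Complex.exp (-Complex.I * ((t * σ : ℝ) : ℂ)) *
      ((ψ t : ℂ) * Complex.exp (((-|t| * a : ℝ) : ℂ)))‖
  rw [← mul_div_assoc, le_div_iff₀ (by positivity)]
  have h1 : X * (1 + a) ^ 2 ≤ 8 * B * (1 + a) := by
    calc X * (1 + a) ^ 2 ≤ 2 * B * (4 / (1 + a)) * (1 + a) ^ 2 := by gcongr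
      _ = 8 * B * (1 + a) := by field_simp; ring
  have h4 : 4 / (1 + a) ≤ 4 := by nlinarith
  have h2 : X * σ ^ 2 ≤ 26 * B * (1 + a) := by
    rw [mul_comm]
    refine T2.trans ?_
    rw [mul_assoc, show 26 * B * (1 + a) = 2 * (B * (13 * (1 + a))) by ring]
    gcongr
    linarith
  linarith

/-- The kernel bound near the singularity of the multiplier, `|a + iτ| ≤ 1`: here the difference
of exponentials has to be kept together, the quotient being bounded by `|t|`. -/
lemma kernel_low_bound {B : ℝ} {ψ ψ' ψ'' : ℝ → ℝ} (h : IsCutoff B ψ ψ' ψ'') (a τ σ : ℝ)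
    (ha : 0 < a) (hz1 : ‖(a : ℂ) + Complex.I * τ‖ ≤ 1) :
    ‖∫ t : ℝ, Complex.exp (-Complex.I * ((t * σ : ℝ) : ℂ)) * ((ψ t : ℂ) *
      ((Complex.exp (Complex.I * ((t * τ : ℝ) : ℂ)) - Complex.exp (((-|t| * a : ℝ) : ℂ))) /
        ((a : ℂ) + Complex.I * τ)))‖ ≤ 76 * B / (1 + σ ^ 2) := by
  have hB : 0 ≤ B := (abs_nonneg _).trans (h.b0 0)
  have hzre : ∀ τ : ℝ, ((a : ℂ) + Complex.I * τ) ≠ 0 := fun τ h0 => by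
    have := congrArg Complex.re h0
    simp at this
    linarith
  set z : ℂ := (a : ℂ) + Complex.I * τ with hz
  have hz0 : 0 < ‖z‖ := norm_pos_iff.2 (hzre τ)
  have haz : a ≤ ‖z‖ := by
    have := Complex.abs_re_le_norm z
    simp [hz, abs_of_pos ha] at this
    exact this
  have hτz : |τ| ≤ ‖z‖ := by
    have := Complex.abs_im_le_norm z
    simpa [hz] using this
  -- profiles on the two half-lines, with `ε = 1` on the right and `ε = -1` on the left
  have prof : ∀ ε : ℝ, |ε| = 1 →
      let p := fun t : ℝ => (Complex.exp (Complex.I * ((t * (ε * τ) : ℝ) : ℂ)) -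
        Complex.exp ((-a * t : ℝ) : ℂ)) / z
      let p' := fun t : ℝ => (Complex.I * ((ε * τ : ℝ) : ℂ) *
        Complex.exp (Complex.I * ((t * (ε * τ) : ℝ) : ℂ)) -
        -a * Complex.exp ((-a * t : ℝ) : ℂ)) / z
      let p'' := fun t : ℝ => (Complex.I * ((ε * τ : ℝ) : ℂ) * (Complex.I * ((ε * τ : ℝ) : ℂ) *
        Complex.exp (Complex.I * ((t * (ε * τ) : ℝ) : ℂ))) -
        -a * (-a * Complex.exp ((-a * t : ℝ) : ℂ))) / z
      (∀ t, HasDerivAt p (p' t) t) ∧ (∀ t, HasDerivAt p' (p'' t) t) ∧ Continuous p'' ∧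
      (∫ t in (0 : ℝ)..3, ‖p t‖ ≤ 9) ∧ (∫ t in (0 : ℝ)..3, ‖p' t‖ ≤ 6) ∧
      (∫ t in (0 : ℝ)..3, ‖p'' t‖ ≤ 6) ∧ ‖p 0‖ ≤ 0 ∧ ‖p' 0‖ ≤ 2 := by
    intro ε hε p p' p''
    have d1 : ∀ t, HasDerivAt p (p' t) t := fun t =>
      ((hasDerivAt_exp_I (ε * τ) t).sub (hasDerivAt_exp_neg a t)).div_const z
    have d2 : ∀ t, HasDerivAt p' (p'' t) t := fun t =>
      (((hasDerivAt_exp_I (ε * τ) t).const_mul _).sub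
        ((hasDerivAt_exp_neg a t).const_mul _)).div_const z
    have c0 : Continuous p := continuous_iff_continuousAt.2 fun t => (d1 t).continuousAt
    have c1 : Continuous p' := continuous_iff_continuousAt.2 fun t => (d2 t).continuousAt
    have c2 : Continuous p'' := by fun_prop
    have hzε : ‖(a : ℂ) + Complex.I * ((ε * τ : ℝ) : ℂ)‖ = ‖z‖ := by
      rw [← sq_eq_sq₀ (norm_nonneg _) (norm_nonneg _), hz, Complex.sq_norm, Complex.sq_norm,
        Complex.normSq_apply, Complex.normSq_apply]
      simp only [Complex.add_re, Complex.add_im, Complex.mul_re, Complex.mul_im, Complex.I_re,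
        Complex.I_im, Complex.ofReal_re, Complex.ofReal_im]
      have := sq_abs ε
      rw [hε] at this
      linear_combination (-τ ^ 2) * this
    have e1 : ∀ t, 0 ≤ t → Real.exp (-a * t) ≤ 1 := fun t ht => by
      rw [Real.exp_le_one_iff]; nlinarith
    have n0 : ∀ t ∈ Set.Icc (0 : ℝ) 3, ‖p t‖ ≤ 3 := by
      intro t ht
      have := norm_exp_sub_le a (ε * τ) t ha.le
      rw [hzε, abs_of_nonneg ht.1, show -t * a = -a * t by ring] at this
      rw [norm_div, div_le_iff₀ hz0]
      exact this.trans (mul_le_mul_of_nonneg_right ht.2 hz0.le)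
    have n1 : ∀ t, 0 ≤ t → ‖p' t‖ ≤ 2 := by
      intro t ht
      rw [norm_div, div_le_iff₀ hz0]
      refine (norm_sub_le _ _).trans ?_
      simp only [norm_mul, norm_neg, norm_exp_posI, norm_exp_neg, Complex.norm_real,
        Real.norm_eq_abs, abs_of_pos ha, Complex.norm_I, hε, one_mul, mul_one]
      nlinarith [e1 t ht]
    have n2 : ∀ t, 0 ≤ t → ‖p'' t‖ ≤ 2 := by
      intro t ht
      rw [norm_div, div_le_iff₀ hz0]
      refine (norm_sub_le _ _).trans ?_
      simp only [norm_mul, norm_neg, norm_exp_posI, norm_exp_neg, Complex.norm_real,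
        Real.norm_eq_abs, abs_of_pos ha, Complex.norm_I, hε, one_mul, mul_one]
      have q1 : |τ| * |τ| ≤ 1 * ‖z‖ :=
        mul_le_mul (hτz.trans hz1) hτz (abs_nonneg _) zero_le_one
      have q2 : a * a ≤ 1 * ‖z‖ := mul_le_mul (haz.trans hz1) haz ha.le zero_le_one
      nlinarith [e1 t ht, mul_nonneg ha.le ha.le]
    have int : ∀ (f : ℝ → ℂ) (c : ℝ), Continuous f → (∀ t ∈ Set.Icc (0 : ℝ) 3, ‖f t‖ ≤ c) →
        ∫ t in (0 : ℝ)..3, ‖f t‖ ≤ 3 * c := by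
      intro f c hf hb
      have := intervalIntegral.integral_mono_on (a := 0) (b := 3) (μ := volume)
        (f := fun t => ‖f t‖) (g := fun _ => c) (by norm_num)
        (Continuous.intervalIntegrable (by fun_prop) _ _)
        (Continuous.intervalIntegrable (by fun_prop) _ _) hb
      simpa using this
    refine ⟨d1, d2, c2, (int p 3 c0 n0).trans (by norm_num),
      (int p' 2 c1 fun t ht => n1 t ht.1).trans (by norm_num),
      (int p'' 2 c2 fun t ht => n2 t ht.1).trans (by norm_num), ?_, n1 0 le_rfl⟩
    simp [p]
  obtain ⟨a1, a2, a3, a4, a5, a6, a7, a8⟩ := prof 1 (by simp)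
  obtain ⟨c1, c2, c3, c4, c5, c6, c7, c8⟩ := prof (-1) (by simp)
  have T := two_sided_bound B ψ ψ' ψ'' h.d1 h.d2 h.cont h.b0 h.b1 h.b2 h.z0 h.z1
    (fun t => (Complex.exp (Complex.I * ((t * τ : ℝ) : ℂ)) -
      Complex.exp (((-|t| * a : ℝ) : ℂ))) / z) _ _ _ _ _ _ (by fun_prop)
    a1 a2 a3 c1 c2 c3
    (fun t ht => by simp only [abs_of_nonneg ht, one_mul, show -t * a = -a * t by ring])
    (fun t ht => by
      simp only [abs_neg, abs_of_nonneg ht, show -t * a = -a * t by ring,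
        show t * (-1 * τ) = -t * τ by ring])
    9 6 6 0 2 a4 a5 a6 a7 a8 c4 c5 c6 c7 c8 σ
  obtain ⟨T1, T2⟩ := T
  rw [le_div_iff₀ (by positivity)]
  linarith

/-- The kernel `k_a(σ,τ)` of `f ↦ F_t[ψ 𝒦f]`, bounded uniformly in `a > 0`. -/
lemma kernel_bound {B : ℝ} {ψ ψ' ψ'' : ℝ → ℝ} (h : IsCutoff B ψ ψ' ψ'') (a τ σ : ℝ)
    (ha : 0 < a) :
    ‖∫ t : ℝ, Complex.exp (-Complex.I * ((t * σ : ℝ) : ℂ)) * ((ψ t : ℂ) *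
      ((Complex.exp (Complex.I * ((t * τ : ℝ) : ℂ)) - Complex.exp (((-|t| * a : ℝ) : ℂ))) /
        ((a : ℂ) + Complex.I * τ)))‖ ≤
      1000 * B * ((1 + a + |τ|)⁻¹ *
        ((1 + (σ - τ) ^ 2)⁻¹ + (1 + a) / ((1 + a) ^ 2 + σ ^ 2))) := by
  have hB : 0 ≤ B := (abs_nonneg _).trans (h.b0 0)
  have hp : 0 < 1 + a + |τ| := by positivity
  have hY : 0 ≤ (1 + a) / ((1 + a) ^ 2 + σ ^ 2) := by positivity
  have hY' : 0 ≤ (1 + (σ - τ) ^ 2)⁻¹ := by positivity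
  have haz : a ≤ ‖(a : ℂ) + Complex.I * τ‖ := by
    have := Complex.abs_re_le_norm ((a : ℂ) + Complex.I * τ)
    simpa [abs_of_pos ha] using this
  have hτz : |τ| ≤ ‖(a : ℂ) + Complex.I * τ‖ := by
    have := Complex.abs_im_le_norm ((a : ℂ) + Complex.I * τ)
    simpa using this
  rcases le_total ‖(a : ℂ) + Complex.I * τ‖ 1 with hz1 | hz1
  · refine (kernel_low_bound h a τ σ ha hz1).trans ?_
    have h1 : (1 + σ ^ 2)⁻¹ ≤ 12 * ((1 + a + |τ|)⁻¹ * ((1 + a) / ((1 + a) ^ 2 + σ ^ 2))) := by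
      rw [← div_eq_inv_mul, div_div, ← mul_div_assoc, inv_eq_one_div,
        div_le_div_iff₀ (by positivity) (by positivity)]
      have k1 : 1 + a + |τ| ≤ 3 := by linarith
      have k2 : (1 + a) ^ 2 + σ ^ 2 ≤ 4 * (1 + σ ^ 2) := by nlinarith [sq_nonneg σ]
      calc 1 * (((1 + a) ^ 2 + σ ^ 2) * (1 + a + |τ|)) ≤ 1 * (4 * (1 + σ ^ 2) * 3) := by gcongr
        _ ≤ 12 * (1 + a) * (1 + σ ^ 2) := by nlinarith [mul_nonneg ha.le (sq_nonneg σ)]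
    rw [div_eq_mul_inv]
    have h2 : (1 + a + |τ|)⁻¹ * ((1 + a) / ((1 + a) ^ 2 + σ ^ 2)) ≤ (1 + a + |τ|)⁻¹ *
        ((1 + (σ - τ) ^ 2)⁻¹ + (1 + a) / ((1 + a) ^ 2 + σ ^ 2)) := by
      gcongr
      linarith
    calc 76 * B * (1 + σ ^ 2)⁻¹ ≤ 76 * B * (12 * ((1 + a + |τ|)⁻¹ *
        ((1 + (σ - τ) ^ 2)⁻¹ + (1 + a) / ((1 + a) ^ 2 + σ ^ 2)))) := by
          gcongr; linarith
      _ ≤ _ := by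
        have hW : 0 ≤ B * ((1 + a + |τ|)⁻¹ *
          ((1 + (σ - τ) ^ 2)⁻¹ + (1 + a) / ((1 + a) ^ 2 + σ ^ 2))) := by positivity
        linarith
  -- for `|a + iτ| ≥ 1` the two exponentials are estimated separately, the first one being the
  -- profile with `a = 0` evaluated at frequency `σ - τ`
  · have cψ := h.continuous
    have hcs : HasCompactSupport ψ := by
      refine HasCompactSupport.of_support_subset_isCompact (isCompact_Icc (a := -3) (b := 3)) ?_
      intro t ht
      by_contra hc
      refine ht (h.z0 t ?_)
      by_contra h3
      rw [not_le, abs_lt] at h3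
      exact hc ⟨h3.1.le, h3.2.le⟩
    have hint : ∀ g : ℝ → ℂ, Continuous g → Integrable
        (fun t : ℝ => Complex.exp (-Complex.I * ((t * σ : ℝ) : ℂ)) * ((ψ t : ℂ) * g t)) := by
      intro g hg
      refine Continuous.integrable_of_hasCompactSupport (by fun_prop) ?_
      refine HasCompactSupport.mul_left (HasCompactSupport.mul_right ?_)
      exact hcs.comp_left (g := Complex.ofReal) Complex.ofReal_zero
    have hsplit : ∫ t : ℝ, Complex.exp (-Complex.I * ((t * σ : ℝ) : ℂ)) * ((ψ t : ℂ) *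
      ((Complex.exp (Complex.I * ((t * τ : ℝ) : ℂ)) - Complex.exp (((-|t| * a : ℝ) : ℂ))) /
        ((a : ℂ) + Complex.I * τ))) =
        ((∫ t : ℝ, Complex.exp (-Complex.I * ((t * (σ - τ) : ℝ) : ℂ)) *
          ((ψ t : ℂ) * Complex.exp (((-|t| * 0 : ℝ) : ℂ)))) -
        ∫ t : ℝ, Complex.exp (-Complex.I * ((t * σ : ℝ) : ℂ)) *
          ((ψ t : ℂ) * Complex.exp (((-|t| * a : ℝ) : ℂ)))) / ((a : ℂ) + Complex.I * τ) := by
      have hh : ∫ t : ℝ, Complex.exp (-Complex.I * ((t * (σ - τ) : ℝ) : ℂ)) *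
          ((ψ t : ℂ) * Complex.exp (((-|t| * 0 : ℝ) : ℂ))) =
          ∫ t : ℝ, Complex.exp (-Complex.I * ((t * σ : ℝ) : ℂ)) * ((ψ t : ℂ) *
            Complex.exp (Complex.I * ((t * τ : ℝ) : ℂ))) := by
        congr 1; ext t
        rw [mul_left_comm, mul_left_comm (Complex.exp _) (ψ t : ℂ), ← Complex.exp_add,
          ← Complex.exp_add]
        congr 2
        push_cast
        ring
      rw [hh, ← integral_sub (hint _ (by fun_prop)) (hint _ (by fun_prop)), ← integral_div]
      congr 1; ext t; ring
    rw [hsplit, norm_div]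
    have b1 := exp_profile_bound h 0 le_rfl (σ - τ)
    have b2 := exp_profile_bound h a ha.le σ
    have b3 := norm_sub_le (∫ t : ℝ, Complex.exp (-Complex.I * ((t * (σ - τ) : ℝ) : ℂ)) *
          ((ψ t : ℂ) * Complex.exp (((-|t| * 0 : ℝ) : ℂ))))
        (∫ t : ℝ, Complex.exp (-Complex.I * ((t * σ : ℝ) : ℂ)) *
          ((ψ t : ℂ) * Complex.exp (((-|t| * a : ℝ) : ℂ))))
    rw [add_zero, one_pow, one_div] at b1
    rw [div_le_iff₀ (by linarith)]
    have hz3 : 1 ≤ 3 * ((1 + a + |τ|)⁻¹ * ‖(a : ℂ) + Complex.I * τ‖) := by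
      rw [← div_eq_inv_mul, ← mul_div_assoc, le_div_iff₀ hp]
      linarith
    set Y := (1 + (σ - τ) ^ 2)⁻¹ + (1 + a) / ((1 + a) ^ 2 + σ ^ 2) with hYd
    have hY0 : 0 ≤ Y := by positivity
    calc _ ≤ 34 * B * Y := by rw [hYd]; linarith
      _ = 34 * B * Y * 1 := (mul_one _).symm
      _ ≤ 34 * B * Y * (3 * ((1 + a + |τ|)⁻¹ * ‖(a : ℂ) + Complex.I * τ‖)) := by gcongr
      _ = 102 * (B * ((1 + a + |τ|)⁻¹ * Y) * ‖(a : ℂ) + Complex.I * τ‖) := by ring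
      _ ≤ 1000 * (B * ((1 + a + |τ|)⁻¹ * Y) * ‖(a : ℂ) + Complex.I * τ‖) := by
        gcongr; norm_num
      _ = _ := by ring

/-! ### `L²` norms of nonnegative functions and the Schur test -/

/-- The (lower) `L²` norm of a nonnegative function. -/
def nrm2 {α : Type*} [MeasureSpace α] (G : α → ℝ≥0∞) : ℝ≥0∞ := (∫⁻ v, G v ^ 2) ^ ((1 : ℝ) / 2)

lemma nrm2_mono {α : Type*} [MeasureSpace α] {G H : α → ℝ≥0∞} (h : ∀ᵐ v, G v ≤ H v) :
    nrm2 G ≤ nrm2 H := by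
  refine ENNReal.rpow_le_rpow (lintegral_mono_ae ?_) (by norm_num)
  filter_upwards [h] with v hv
  gcongr

lemma nrm2_add_le {α : Type*} [MeasureSpace α] {G H : α → ℝ≥0∞} (hG : Measurable G)
    (hH : Measurable H) : nrm2 (fun v => G v + H v) ≤ nrm2 G + nrm2 H := by
  have := ENNReal.lintegral_Lp_add_le (μ := (volume : Measure α)) hG.aemeasurable
    hH.aemeasurable (p := 2) (by norm_num)
  simpa [nrm2] using this

/-- Countable Minkowski inequality in `L²`. -/
lemma nrm2_tsum_le {α : Type*} [MeasureSpace α] {G : ℤ → α → ℝ≥0∞} (hG : ∀ i, Measurable (G i)) :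
    nrm2 (fun v => ∑' i, G i v) ≤ ∑' i, nrm2 (G i) := by
  have hfin : ∀ s : Finset ℤ, nrm2 (fun v => ∑ i ∈ s, G i v) ≤ ∑ i ∈ s, nrm2 (G i) := by
    intro s
    induction s using Finset.induction_on with
    | empty => simp [nrm2]
    | insert i s hi ih =>
      simp only [Finset.sum_insert hi]
      exact (nrm2_add_le (hG i) (Finset.measurable_sum _ fun i _ => hG i)).trans (by gcongr)
  let s : ℕ → Finset ℤ := fun n => Finset.Icc (-(n : ℤ)) n
  have hs : Filter.Tendsto s Filter.atTop Filter.atTop :=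
    Filter.tendsto_atTop_finset_of_monotone
      (fun a b hab => Finset.Icc_subset_Icc (by omega) (by omega))
      (fun x => ⟨x.natAbs, by simp only [s, Finset.mem_Icc]; omega⟩)
  have hmono : Monotone s := fun a b hab => Finset.Icc_subset_Icc (by omega) (by omega)
  have h1 : ∀ v, Filter.Tendsto (fun n => (∑ i ∈ s n, G i v) ^ 2) Filter.atTop
      (nhds ((∑' i, G i v) ^ 2)) := fun v =>
    ((ENNReal.continuous_pow 2).tendsto _).comp (ENNReal.summable.hasSum.comp hs)
  have h2 : Filter.Tendsto (fun n => ∫⁻ v, (∑ i ∈ s n, G i v) ^ 2) Filter.atTop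
      (nhds (∫⁻ v, (∑' i, G i v) ^ 2)) := by
    refine lintegral_tendsto_of_tendsto_of_monotone (fun n => ?_) ?_ ?_
    · exact ((Finset.measurable_sum _ fun i _ => hG i).pow_const 2).aemeasurable
    · refine Filter.Eventually.of_forall fun v a b hab => ?_
      have := Finset.sum_le_sum_of_subset (f := fun i => G i v) (hmono hab)
      dsimp only
      gcongr
    · exact Filter.Eventually.of_forall h1
  have h3 := ((ENNReal.continuous_rpow_const (y := (1 : ℝ) / 2)).tendsto _).comp h2
  refine le_of_tendsto' h3 fun n => ?_
  exact (hfin (s n)).trans (ENNReal.sum_le_tsum _)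

/-- The Cauchy–Schwarz inequality with respect to the measure `k dμ`. -/
lemma sq_lintegral_mul_le {α : Type*} [MeasurableSpace α] (μ : Measure α) {k g : α → ℝ≥0∞}
    (hk : Measurable k) (hg : Measurable g) :
    (∫⁻ x, k x * g x ∂μ) ^ 2 ≤ (∫⁻ x, k x ∂μ) * ∫⁻ x, k x * g x ^ 2 ∂μ := by
  have hsq : ∀ x : ℝ≥0∞, (x ^ ((1 : ℝ) / 2)) ^ (2 : ℝ) = x := fun x => by
    rw [← ENNReal.rpow_mul]; norm_num
  have hsq' : ∀ x : ℝ≥0∞, (x ^ ((1 : ℝ) / 2)) ^ 2 = x := fun x => by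
    rw [← ENNReal.rpow_natCast, Nat.cast_ofNat]; exact hsq x
  have h := ENNReal.lintegral_mul_le_Lp_mul_Lq μ (p := 2) (q := 2)
    (by constructor <;> norm_num)
    (f := fun x => k x ^ ((1 : ℝ) / 2)) (g := fun x => k x ^ ((1 : ℝ) / 2) * g x)
    (by fun_prop) (by fun_prop)
  simp only [Pi.mul_apply, ENNReal.mul_rpow_of_nonneg _ _ (zero_le_two : (0 : ℝ) ≤ 2), hsq] at h
  have h0 : ∀ x, k x ^ ((1 : ℝ) / 2) * (k x ^ ((1 : ℝ) / 2) * g x) = k x * g x := fun x => by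
    rw [← mul_assoc, ← sq, hsq']
  simp only [h0] at h
  calc _ ≤ _ := pow_le_pow_left' h 2
    _ = _ := by
      rw [mul_pow, hsq', hsq']
      simp

/-- Schur's test on `S × S'`, with a spectator variable `z` and weight `Θ(z)`. -/
lemma schur_term {Z : Type*} [MeasureSpace Z] [SFinite (volume : Measure Z)]
    (Θ : Z → ℝ≥0∞) (hΘ : Measurable Θ)
    (k : ℝ → ℝ → ℝ≥0∞) (hk : Measurable (Function.uncurry k)) (h : ℝ × Z → ℝ≥0∞)
    (hh : Measurable h) (S S' : Set ℝ) (hS : MeasurableSet S) (R R' : ℝ≥0∞)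
    (hS' : MeasurableSet S')
    (h1 : ∀ σ ∈ S, ∫⁻ τ in S', k σ τ ≤ R) (h2 : ∀ τ ∈ S', ∫⁻ σ in S, k σ τ ≤ R') :
    nrm2 (fun v : ℝ × Z => Θ v.2 * S.indicator 1 v.1 * ∫⁻ τ in S', k v.1 τ * h (τ, v.2)) ≤
      (R * R') ^ ((1 : ℝ) / 2) * nrm2 (fun v : ℝ × Z => Θ v.2 * h v) := by
  rw [nrm2, nrm2, ← ENNReal.mul_rpow_of_nonneg _ _ (by norm_num)]
  refine ENNReal.rpow_le_rpow ?_ (by norm_num)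
  have m1 : Measurable (fun v : ℝ × Z => ∫⁻ τ in S', k v.1 τ * h (τ, v.2)) := by
    refine Measurable.lintegral_prod_right' (f := fun w : (ℝ × Z) × ℝ =>
      k w.1.1 w.2 * h (w.2, w.1.2)) ?_
    have : Measurable (fun w : (ℝ × Z) × ℝ => Function.uncurry k (w.1.1, w.2)) :=
      hk.comp (by fun_prop)
    exact this.mul (hh.comp (by fun_prop))
  have m2 : Measurable (S.indicator (1 : ℝ → ℝ≥0∞)) := measurable_one.indicator hS
  have m3 : Measurable fun v : ℝ × Z =>
      (Θ v.2 * S.indicator 1 v.1 * ∫⁻ τ in S', k v.1 τ * h (τ, v.2)) ^ 2 :=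
    (((hΘ.comp measurable_snd).mul (m2.comp measurable_fst)).mul m1).pow_const 2
  have m4 : Measurable fun v : ℝ × Z => (Θ v.2 * h v) ^ 2 := by fun_prop
  rw [Measure.volume_eq_prod, lintegral_prod_symm' _ m3,
    lintegral_prod_symm' _ m4, ← lintegral_const_mul _ m4.lintegral_prod_left']
  refine lintegral_mono fun z => ?_
  dsimp only
  have mh : Measurable fun τ => h (τ, z) := by fun_prop
  have e1 : ∫⁻ σ, (Θ z * S.indicator 1 σ * ∫⁻ τ in S', k σ τ * h (τ, z)) ^ 2 =
      Θ z ^ 2 * ∫⁻ σ in S, (∫⁻ τ in S', k σ τ * h (τ, z)) ^ 2 := by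
    have mm : Measurable fun σ => ∫⁻ τ in S', k σ τ * h (τ, z) :=
      m1.comp (measurable_id.prodMk measurable_const)
    rw [← lintegral_indicator hS, ← lintegral_const_mul _ ((mm.pow_const 2).indicator hS)]
    refine lintegral_congr fun σ => ?_
    by_cases hσ : σ ∈ S <;> simp [hσ, mul_pow]
  have e2 : ∫⁻ σ, (Θ z * h (σ, z)) ^ 2 = Θ z ^ 2 * ∫⁻ σ, h (σ, z) ^ 2 := by
    rw [← lintegral_const_mul _ (mh.pow_const 2)]
    simp only [mul_pow]
  rw [e1, e2, mul_left_comm]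
  gcongr
  have mk : Measurable (fun w : ℝ × ℝ => k w.1 w.2) := hk
  have mkσ : ∀ σ, Measurable fun τ => k σ τ := fun σ =>
    mk.comp (measurable_const.prodMk measurable_id)
  have mkτ : ∀ τ, Measurable fun σ => k σ τ := fun τ =>
    mk.comp (measurable_id.prodMk measurable_const)
  calc ∫⁻ σ in S, (∫⁻ τ in S', k σ τ * h (τ, z)) ^ 2
      ≤ ∫⁻ σ in S, R * ∫⁻ τ in S', k σ τ * h (τ, z) ^ 2 := by
        refine setLIntegral_mono' hS fun σ hσ => ?_
        exact (sq_lintegral_mul_le _ (mkσ σ) mh).trans (by gcongr; exact h1 σ hσ)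
    _ = R * ∫⁻ τ in S', (∫⁻ σ in S, k σ τ) * h (τ, z) ^ 2 := by
        have mm : Measurable fun w : ℝ × ℝ => k w.1 w.2 * h (w.2, z) ^ 2 := by fun_prop
        rw [lintegral_const_mul _ (Measurable.lintegral_prod_right' mm), lintegral_lintegral_swap mm.aemeasurable]
        congr 1
        refine lintegral_congr fun τ => ?_
        dsimp only
        rw [lintegral_mul_const _ (mkτ τ)]
    _ ≤ R * ∫⁻ τ in S', R' * h (τ, z) ^ 2 := by
        gcongr 1
        exact setLIntegral_mono' hS' fun τ hτ => by gcongr; exact h2 τ hτ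
    _ = R * R' * ∫⁻ τ in S', h (τ, z) ^ 2 := by
        rw [lintegral_const_mul _ (by fun_prop), mul_assoc]
    _ ≤ R * R' * ∫⁻ τ, h (τ, z) ^ 2 := by
        gcongr
        exact Measure.restrict_le_self

/-! ### Schur constants on dyadic shells -/

/-- The dyadic shell `|σ| ∼ 2^l`. -/
def shell (l : ℤ) : Set ℝ := {σ | (2 : ℝ) ^ l / 2 ≤ |σ| ∧ |σ| ≤ 2 * (2 : ℝ) ^ l}

lemma measurableSet_shell (l : ℤ) : MeasurableSet (shell l) := by
  have h : Measurable fun σ : ℝ => |σ| := by fun_prop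
  exact (measurableSet_le measurable_const h).inter (measurableSet_le h measurable_const)

lemma volume_shell_le (l : ℤ) : volume (shell l) ≤ ENNReal.ofReal (4 * (2 : ℝ) ^ l) := by
  have : shell l ⊆ Set.Icc (-(2 * (2 : ℝ) ^ l)) (2 * (2 : ℝ) ^ l) := fun x hx => abs_le.1 hx.2
  refine (measure_mono this).trans ?_
  rw [Real.volume_Icc]
  exact ENNReal.ofReal_le_ofReal (by linarith)

lemma lintegral_cauchy_le (c : ℝ) (hc : 0 ≤ c) (a : ℝ) :
    ∫⁻ τ, ENNReal.ofReal (c * (1 + (τ - a) ^ 2)⁻¹) ≤ ENNReal.ofReal (4 * c) := by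
  have h0 : ∫⁻ τ, ENNReal.ofReal (c * (1 + (τ - a) ^ 2)⁻¹) =
      ∫⁻ τ, ENNReal.ofReal (c * (1 + τ ^ 2)⁻¹) :=
    lintegral_sub_right_eq_self (fun τ : ℝ => ENNReal.ofReal (c * (1 + τ ^ 2)⁻¹)) a
  rw [h0, ← ofReal_integral_eq_lintegral_ofReal (integrable_inv_one_add_sq.const_mul c)
    (Filter.Eventually.of_forall fun x => by positivity), integral_const_mul,
    integral_univ_inv_one_add_sq]
  refine ENNReal.ofReal_le_ofReal ?_
  nlinarith [Real.pi_le_four]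

/-- `2^{-|l-l'|}` as the ratio of the smaller to the larger of the two dyadic numbers. -/
lemma half_pow_natAbs (l l' : ℤ) :
    ((1 : ℝ) / 2) ^ (l - l').natAbs =
      (2 : ℝ) ^ l * (2 : ℝ) ^ l' / (max ((2 : ℝ) ^ l) ((2 : ℝ) ^ l')) ^ 2 := by
  wlog h : l' ≤ l generalizing l l'
  · have := this l' l (by omega)
    rw [max_comm, mul_comm, ← this, ← Int.natAbs_neg]; congr 2; ring
  · have h2 : (2 : ℝ) ^ l' ≤ (2 : ℝ) ^ l := zpow_le_zpow_right₀ (by norm_num) h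
    obtain ⟨k, hk⟩ := Int.le.dest h
    have : (l - l').natAbs = k := by omega
    rw [this, max_eq_left h2, ← hk, zpow_add₀ (by norm_num), zpow_natCast]
    have : (2 : ℝ) ^ l' ≠ 0 := by positivity
    field_simp
    rw [← mul_pow]; norm_num

/-- Schur constants for the convolution part of the kernel on `shell l × shell l'`. -/
lemma schur_consts_A (D : ℝ) (hD : 1 ≤ D) (l l' : ℤ) :
    ∃ R R' : ℝ≥0∞,
      (∀ σ ∈ shell l, ∫⁻ τ in shell l',
        ENNReal.ofReal (4 / (D + (2 : ℝ) ^ l') * (1 + (σ - τ) ^ 2)⁻¹) ≤ R) ∧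
      (∀ τ ∈ shell l', ∫⁻ σ in shell l,
        ENNReal.ofReal (4 / (D + (2 : ℝ) ^ l') * (1 + (σ - τ) ^ 2)⁻¹) ≤ R') ∧
      R * R' ≤ ENNReal.ofReal (65536 * ((1 : ℝ) / 2) ^ (l - l').natAbs /
        ((D + (2 : ℝ) ^ l) * (D + (2 : ℝ) ^ l'))) := by
  have hL : (0 : ℝ) < 2 ^ l := by positivity
  have hL' : (0 : ℝ) < 2 ^ l' := by positivity
  -- neighbouring shells: the kernel is integrable with integral `O(1)` in either variable
  by_cases hn : (l - l').natAbs ≤ 2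
  · refine ⟨ENNReal.ofReal (4 * (4 / (D + (2 : ℝ) ^ l'))),
      ENNReal.ofReal (4 * (4 / (D + (2 : ℝ) ^ l'))), fun σ _ => ?_, fun τ _ => ?_, ?_⟩
    · refine (setLIntegral_le_lintegral _ _).trans ?_
      have : ∀ τ, (σ - τ) ^ 2 = (τ - σ) ^ 2 := fun τ => by ring
      simp only [this]
      exact lintegral_cauchy_le _ (by positivity) σ
    · exact (setLIntegral_le_lintegral _ _).trans (lintegral_cauchy_le _ (by positivity) τ)
    · rw [← ENNReal.ofReal_mul (by positivity)]
      refine ENNReal.ofReal_le_ofReal ?_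
      have h4 : ((1 : ℝ) / 2) ^ 2 ≤ ((1 : ℝ) / 2) ^ (l - l').natAbs :=
        pow_le_pow_of_le_one (by norm_num) (by norm_num) hn
      have h5 : (2 : ℝ) ^ l ≤ 4 * 2 ^ l' := by
        have : (2 : ℝ) ^ l ≤ 2 ^ (l' + 2) := zpow_le_zpow_right₀ (by norm_num) (by omega)
        rw [zpow_add₀ (by norm_num)] at this
        linarith [this]
      rw [le_div_iff₀ (by positivity)]
      have h6 : 4 * (4 / (D + (2 : ℝ) ^ l')) * (4 * (4 / (D + 2 ^ l'))) *
          ((D + 2 ^ l) * (D + 2 ^ l')) = 256 * ((D + 2 ^ l) / (D + 2 ^ l')) := by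
        field_simp; ring
      rw [h6]
      have h7 : (D + (2 : ℝ) ^ l) / (D + 2 ^ l') ≤ 4 := by
        rw [div_le_iff₀ (by positivity)]; linarith
      nlinarith
  -- distant shells: `|σ - τ|` is comparable to the larger of the two dyadic numbers
  · set ν := max ((2 : ℝ) ^ l) ((2 : ℝ) ^ l') with hν
    have hνpos : 0 < ν := lt_max_of_lt_left hL
    have hdist : ∀ σ ∈ shell l, ∀ τ ∈ shell l', ν ^ 2 / 16 ≤ (σ - τ) ^ 2 := by
      intro σ hσ τ hτ
      obtain ⟨s1, s2⟩ := hσ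
      obtain ⟨t1, t2⟩ := hτ
      have key : ν / 4 ≤ |σ - τ| := by
        rcases le_total l l' with h | h
        · have : (2 : ℝ) ^ (l + 3) ≤ 2 ^ l' := zpow_le_zpow_right₀ (by norm_num) (by omega)
          rw [zpow_add₀ (by norm_num)] at this
          have h8 : (2 : ℝ) ^ l * 8 ≤ 2 ^ l' := by norm_num at this; linarith
          rw [hν, max_eq_right (by linarith)]
          have := abs_sub_abs_le_abs_sub τ σ
          rw [abs_sub_comm τ σ] at this
          linarith
        · have : (2 : ℝ) ^ (l' + 3) ≤ 2 ^ l := zpow_le_zpow_right₀ (by norm_num) (by omega)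
          rw [zpow_add₀ (by norm_num)] at this
          have h8 : (2 : ℝ) ^ l' * 8 ≤ 2 ^ l := by norm_num at this; linarith
          rw [hν, max_eq_left (by linarith)]
          have := abs_sub_abs_le_abs_sub σ τ
          linarith
      rw [← sq_abs (σ - τ)]
      nlinarith
    have hk : ∀ σ ∈ shell l, ∀ τ ∈ shell l',
        ENNReal.ofReal (4 / (D + (2 : ℝ) ^ l') * (1 + (σ - τ) ^ 2)⁻¹) ≤
          ENNReal.ofReal (4 / (D + (2 : ℝ) ^ l') * (16 / (1 + ν ^ 2))) := by
      intro σ hσ τ hτ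
      refine ENNReal.ofReal_le_ofReal ?_
      gcongr
      rw [inv_eq_one_div, div_le_div_iff₀ (by positivity) (by positivity)]
      nlinarith [hdist σ hσ τ hτ]
    have hconst : ∀ (c : ℝ) (m : ℤ), 0 ≤ c → ∫⁻ _ in shell m, ENNReal.ofReal c ≤
        ENNReal.ofReal (c * (4 * 2 ^ m)) := by
      intro c m hc
      rw [setLIntegral_const, ENNReal.ofReal_mul hc]
      gcongr
      exact volume_shell_le m
    refine ⟨ENNReal.ofReal (4 / (D + (2 : ℝ) ^ l') * (16 / (1 + ν ^ 2)) * (4 * 2 ^ l')),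
      ENNReal.ofReal (4 / (D + (2 : ℝ) ^ l') * (16 / (1 + ν ^ 2)) * (4 * 2 ^ l)),
      fun σ hσ => ?_, fun τ hτ => ?_, ?_⟩
    · exact (setLIntegral_mono' (measurableSet_shell l') fun τ hτ => hk σ hσ τ hτ).trans
        (hconst _ _ (by positivity))
    · exact (setLIntegral_mono' (measurableSet_shell l) fun σ hσ => hk σ hσ τ hτ).trans
        (hconst _ _ (by positivity))
    · rw [← ENNReal.ofReal_mul (by positivity)]
      refine ENNReal.ofReal_le_ofReal ?_
      rw [half_pow_natAbs, ← hν]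
      have hLν : (2 : ℝ) ^ l ≤ ν := le_max_left _ _
      generalize (2 : ℝ) ^ l = x at *
      generalize (2 : ℝ) ^ l' = y at *
      have e1 : 4 / (D + y) * (16 / (1 + ν ^ 2)) * (4 * y) *
          (4 / (D + y) * (16 / (1 + ν ^ 2)) * (4 * x)) =
          (65536 * (x * y)) / ((D + y) ^ 2 * (1 + ν ^ 2) ^ 2) := by field_simp; ring
      have e2 : 65536 * (x * y / ν ^ 2) / ((D + x) * (D + y)) =
          (65536 * (x * y)) / (ν ^ 2 * ((D + x) * (D + y))) := by field_simp
      rw [e1, e2]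
      apply div_le_div_of_nonneg_left (by positivity) (by positivity)
      have h1 : (D + x) ≤ D * (1 + ν) := by nlinarith
      have h2 : ν ^ 2 * (1 + ν) ≤ (1 + ν ^ 2) ^ 2 := by
        nlinarith [sq_nonneg (ν - 1), sq_nonneg (ν * (ν - 1)), mul_pos hνpos hνpos]
      calc ν ^ 2 * ((D + x) * (D + y)) ≤ ν ^ 2 * ((D * (1 + ν)) * (D + y)) := by gcongr
        _ = (D * (D + y)) * (ν ^ 2 * (1 + ν)) := by ring
        _ ≤ ((D + y) * (D + y)) * (1 + ν ^ 2) ^ 2 := by gcongr; linarith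
        _ = _ := by ring

lemma half_pow_natAbs_ge (D : ℝ) (l j : ℤ) (h1 : (2 : ℝ) ^ j ≤ D) (h2 : D < 2 ^ (j + 1)) :
    (2 : ℝ) ^ l * D / (2 * (D ^ 2 + ((2 : ℝ) ^ l) ^ 2)) ≤ ((1 : ℝ) / 2) ^ (l - j).natAbs := by
  rw [half_pow_natAbs]
  have hL : (0 : ℝ) < 2 ^ l := by positivity
  have hJ : (0 : ℝ) < 2 ^ j := by positivity
  rw [zpow_add₀ (by norm_num), zpow_one] at h2
  generalize (2 : ℝ) ^ l = x at *
  generalize (2 : ℝ) ^ j = y at *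
  have hD : 0 < D := hJ.trans_le h1
  have hm : 0 < max x y := lt_max_of_lt_left hL
  rw [div_le_div_iff₀ (by positivity) (by positivity)]
  have : (max x y) ^ 2 ≤ D ^ 2 + x ^ 2 := by
    rcases max_cases x y with h | h <;> rw [h.1] <;> nlinarith
  calc x * D * max x y ^ 2 ≤ x * (y * 2) * (D ^ 2 + x ^ 2) := by gcongr
    _ = _ := by ring

/-- Schur constants for the rank-one part of the kernel on `shell l × shell l'`. -/
lemma schur_consts_B (D : ℝ) (j : ℤ) (h1 : (2 : ℝ) ^ j ≤ D) (h2 : D < 2 ^ (j + 1))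
    (l l' : ℤ) :
    ∃ R R' : ℝ≥0∞,
      (∀ σ ∈ shell l, ∫⁻ _τ in shell l',
        ENNReal.ofReal (4 / (D + (2 : ℝ) ^ l') * (64 * D / (D ^ 2 + ((2 : ℝ) ^ l) ^ 2))) ≤ R) ∧
      (∀ τ ∈ shell l', ∫⁻ _σ in shell l,
        ENNReal.ofReal (4 / (D + (2 : ℝ) ^ l') * (64 * D / (D ^ 2 + ((2 : ℝ) ^ l) ^ 2))) ≤ R') ∧
      R * R' ≤ ENNReal.ofReal (4194304 * ((1 : ℝ) / 2) ^ (l - j).natAbs /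
        ((D + (2 : ℝ) ^ l) * (D + (2 : ℝ) ^ l'))) := by
  have hL : (0 : ℝ) < 2 ^ l := by positivity
  have hL' : (0 : ℝ) < 2 ^ l' := by positivity
  have hJ : (0 : ℝ) < 2 ^ j := by positivity
  have hD : 0 < D := hJ.trans_le h1
  have hconst : ∀ (c : ℝ) (m : ℤ), 0 ≤ c → ∫⁻ _ in shell m, ENNReal.ofReal c ≤
      ENNReal.ofReal (c * (4 * 2 ^ m)) := by
    intro c m hc
    rw [setLIntegral_const, ENNReal.ofReal_mul hc]
    gcongr
    exact volume_shell_le m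
  refine ⟨_, _, fun σ hσ => hconst _ _ (by positivity), fun τ hτ => hconst _ _ (by positivity), ?_⟩
  rw [← ENNReal.ofReal_mul (by positivity)]
  refine ENNReal.ofReal_le_ofReal ?_
  have hg := half_pow_natAbs_ge D l j h1 h2
  refine le_trans ?_ (div_le_div_of_nonneg_right
    (mul_le_mul_of_nonneg_left hg (by norm_num)) (by positivity))
  clear hg
  generalize (2 : ℝ) ^ l = x at *
  generalize (2 : ℝ) ^ l' = y at *
  have e1 : 4 / (D + y) * (64 * D / (D ^ 2 + x ^ 2)) * (4 * y) *
      (4 / (D + y) * (64 * D / (D ^ 2 + x ^ 2)) * (4 * x)) =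
      (1048576 * (x * D) * (D * y)) / ((D + y) ^ 2 * (D ^ 2 + x ^ 2) ^ 2) := by
    field_simp; ring
  have e2 : 4194304 * (x * D / (2 * (D ^ 2 + x ^ 2))) / ((D + x) * (D + y)) =
      (1048576 * (x * D) * 2) / ((D ^ 2 + x ^ 2) * (D + x) * (D + y)) := by
    field_simp; ring
  rw [e1, e2, div_le_div_iff₀ (by positivity) (by positivity)]
  have h3 : D * (D + x) ≤ 2 * (D ^ 2 + x ^ 2) := by nlinarith [sq_nonneg (D - x)]
  calc 1048576 * (x * D) * (D * y) * ((D ^ 2 + x ^ 2) * (D + x) * (D + y))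
      = 1048576 * (x * D) * (D ^ 2 + x ^ 2) * (D + y) * (y * (D * (D + x))) := by ring
    _ ≤ 1048576 * (x * D) * (D ^ 2 + x ^ 2) * (D + y) * ((D + y) * (2 * (D ^ 2 + x ^ 2))) := by
        gcongr
        linarith
    _ = _ := by ring

/-! ### Summation over dyadic pieces -/

/-- The majorant of the kernel of the localized Duhamel operator. -/
def kerMaj (a σ τ : ℝ) : ℝ :=
  (1 + a + |τ|)⁻¹ * ((1 + (σ - τ) ^ 2)⁻¹ + (1 + a) / ((1 + a) ^ 2 + σ ^ 2))

/-- On a pair of dyadic shells and for `a ∼ M²`, the majorant is at most the sum of a convolution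
kernel and of a constant. -/
lemma kerMaj_le (M a σ τ : ℝ) (l l' : ℤ) (ha1 : M ^ 2 / 4 ≤ a) (ha2 : a ≤ 4 * M ^ 2)
    (hσ : σ ∈ shell l) (hτ : τ ∈ shell l') :
    kerMaj a σ τ ≤ 4 / (1 + M ^ 2 + (2 : ℝ) ^ l') * (1 + (σ - τ) ^ 2)⁻¹ +
      4 / (1 + M ^ 2 + (2 : ℝ) ^ l') *
        (64 * (1 + M ^ 2) / ((1 + M ^ 2) ^ 2 + ((2 : ℝ) ^ l) ^ 2)) := by
  have hL : (0 : ℝ) < 2 ^ l := by positivity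
  have hL' : (0 : ℝ) < 2 ^ l' := by positivity
  have hM := sq_nonneg M
  have ha : 0 ≤ a := by linarith
  obtain ⟨s1, s2⟩ := hσ
  obtain ⟨t1, t2⟩ := hτ
  have h1 : (1 + a + |τ|)⁻¹ ≤ 4 / (1 + M ^ 2 + (2 : ℝ) ^ l') := by
    rw [inv_eq_one_div, div_le_div_iff₀ (by positivity) (by positivity)]
    linarith
  have hσ2 : ((2 : ℝ) ^ l) ^ 2 / 4 ≤ σ ^ 2 := by
    rw [← sq_abs σ]; nlinarith
  have h2 : (1 + a) / ((1 + a) ^ 2 + σ ^ 2) ≤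
      64 * (1 + M ^ 2) / ((1 + M ^ 2) ^ 2 + ((2 : ℝ) ^ l) ^ 2) := by
    have h3 : 1 + a ≤ 4 * (1 + M ^ 2) := by linarith
    have h4 : ((1 + M ^ 2) ^ 2 + ((2 : ℝ) ^ l) ^ 2) / 16 ≤ (1 + a) ^ 2 + σ ^ 2 := by
      have : (1 + M ^ 2) / 4 ≤ 1 + a := by linarith
      nlinarith
    rw [div_le_div_iff₀ (by positivity) (by positivity)]
    calc (1 + a) * ((1 + M ^ 2) ^ 2 + ((2 : ℝ) ^ l) ^ 2)
        ≤ (4 * (1 + M ^ 2)) * (16 * ((1 + a) ^ 2 + σ ^ 2)) := by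
          gcongr
          linarith
      _ = _ := by ring
  rw [kerMaj, ← mul_add]
  gcongr

/-- The sum of the two-sided geometric series with ratio `2^{-1/2}`. -/
def geomQ : ℝ≥0∞ := ∑' k : ℤ, ENNReal.ofReal (Real.sqrt (1 / 2) ^ k.natAbs)

lemma geomQ_lt_top : geomQ < ⊤ := by
  have h : Real.sqrt (1 / 2) < 1 := by
    rw [Real.sqrt_lt' one_pos]; norm_num
  have hs : Summable fun k : ℤ => Real.sqrt (1 / 2) ^ k.natAbs := by
    have hg := summable_geometric_of_lt_one (Real.sqrt_nonneg _) h
    exact Summable.of_nat_of_neg (by simpa using hg) (by simpa using hg)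
  rw [geomQ, ← ENNReal.ofReal_tsum_of_nonneg (fun k => by positivity) hs]
  exact ENNReal.ofReal_lt_top

lemma sum_geomQ (j : ℤ) :
    ∑' l : ℤ, ENNReal.ofReal (Real.sqrt (1 / 2) ^ (l - j).natAbs) = geomQ :=
  (Equiv.subRight j).tsum_eq fun k : ℤ => ENNReal.ofReal (Real.sqrt (1 / 2) ^ k.natAbs)

lemma weight_le {x : ℝ} (hx : 0 ≤ x) : jbr x (1 / 2) ≤ Real.sqrt (1 + x) := by
  have h : (1 + x ^ 2) ≤ (1 + x) ^ (2 : ℝ) := by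
    rw [Real.rpow_two]; nlinarith
  calc jbr x (1 / 2) ≤ ((1 + x) ^ (2 : ℝ)) ^ ((1 / 2 : ℝ) / 2) := by
        unfold jbr
        exact Real.rpow_le_rpow (by positivity) h (by norm_num)
    _ = _ := by
        rw [← Real.rpow_mul (by positivity), Real.sqrt_eq_rpow]; norm_num

lemma weight_ge {x : ℝ} (hx : 0 ≤ x) : (Real.sqrt (1 + x))⁻¹ ≤ jbr x (-(1 / 2)) := by
  have h1 : jbr x (-(1 / 2)) = (jbr x (1 / 2))⁻¹ := by
    rw [jbr, jbr, ← Real.rpow_neg (by positivity)]; congr 1; ring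
  rw [h1]
  exact inv_anti₀ (by unfold jbr; positivity) (weight_le hx)

/-- Weighted form of a Schur bound with constant `c² 2^{-k} / ((D+L)(D+L'))`. -/
lemma weighted_schur {M : ℝ} {c : ℝ} (hc : 0 ≤ c) (l l' : ℤ) (k : ℕ) {R : ℝ≥0∞}
    (hR : R ≤ ENNReal.ofReal (c ^ 2 * ((1 : ℝ) / 2) ^ k /
        ((1 + M ^ 2 + (2 : ℝ) ^ l) * (1 + M ^ 2 + (2 : ℝ) ^ l')))) :
    ENNReal.ofReal (jbr (M ^ 2 + (2 : ℝ) ^ l) (1 / 2)) * R ^ ((1 : ℝ) / 2) ≤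
      ENNReal.ofReal c * ENNReal.ofReal (Real.sqrt (1 / 2) ^ k) *
        ENNReal.ofReal (jbr (M ^ 2 + (2 : ℝ) ^ l') (-(1 / 2))) := by
  have hL : (0 : ℝ) < 2 ^ l := by positivity
  have hL' : (0 : ℝ) < 2 ^ l' := by positivity
  have h1 : R ^ ((1 : ℝ) / 2) ≤ ENNReal.ofReal (Real.sqrt (c ^ 2 * ((1 : ℝ) / 2) ^ k /
        ((1 + M ^ 2 + (2 : ℝ) ^ l) * (1 + M ^ 2 + (2 : ℝ) ^ l')))) := by
    refine (ENNReal.rpow_le_rpow hR (by norm_num)).trans ?_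
    rw [ENNReal.ofReal_rpow_of_nonneg (by positivity) (by norm_num), Real.sqrt_eq_rpow]
  have h2 : Real.sqrt (((1 : ℝ) / 2) ^ k) = Real.sqrt (1 / 2) ^ k := by
    rw [Real.sqrt_eq_iff_mul_self_eq (by positivity) (by positivity), ← mul_pow,
      Real.mul_self_sqrt (by norm_num)]
  rw [Real.sqrt_div (by positivity), Real.sqrt_mul (by positivity), Real.sqrt_mul (by positivity),
    Real.sqrt_sq hc, h2] at h1
  refine (mul_le_mul' (ENNReal.ofReal_le_ofReal (weight_le (by positivity))) h1).trans ?_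
  rw [← ENNReal.ofReal_mul (by positivity), ← ENNReal.ofReal_mul (by positivity),
    ← ENNReal.ofReal_mul (by positivity)]
  refine ENNReal.ofReal_le_ofReal ?_
  refine le_trans (le_of_eq ?_) (mul_le_mul_of_nonneg_left
    (weight_ge (x := M ^ 2 + (2 : ℝ) ^ l') (by positivity)) (by positivity))
  rw [add_assoc, add_assoc]
  have : Real.sqrt (1 + (M ^ 2 + 2 ^ l)) ≠ 0 := by positivity
  have : Real.sqrt (1 + (M ^ 2 + 2 ^ l')) ≠ 0 := by positivity
  field_simp

/-- The estimate for a fixed spatial frequency piece: dyadic decomposition in the modulation,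
Schur's test for each pair of modulation shells, and summation of the resulting off-diagonal
decay. -/
lemma dyadic_sum {Z : Type*} [MeasureSpace Z] [SFinite (volume : Measure Z)]
    (Θ : Z → ℝ≥0∞) (hΘ : Measurable Θ) (a : Z → ℝ) (M : ℝ)
    (hΘa : ∀ z, Θ z ≠ 0 → M ^ 2 / 4 ≤ a z ∧ a z ≤ 4 * M ^ 2)
    (Φ : ℤ → ℝ → ℝ≥0∞) (hΦ : ∀ l, Measurable (Φ l)) (hΦ1 : ∀ l σ, Φ l σ ≤ 1)
    (hΦs : ∀ l σ, Φ l σ ≠ 0 → σ ∈ shell l) (hΦsum : ∀ τ, τ ≠ 0 → 1 ≤ ∑' l, Φ l τ)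
    (g : ℝ × Z → ℝ≥0∞) (hg : Measurable g) :
    ∑' l : ℤ, ENNReal.ofReal (jbr (M ^ 2 + (2 : ℝ) ^ l) (1 / 2)) *
        nrm2 (fun v : ℝ × Z => Θ v.2 * Φ l v.1 *
          ∫⁻ τ, ENNReal.ofReal (kerMaj (a v.2) v.1 τ) * g (τ, v.2)) ≤
      ENNReal.ofReal 2304 * geomQ *
        ∑' l : ℤ, ENNReal.ofReal (jbr (M ^ 2 + (2 : ℝ) ^ l) (-(1 / 2))) *
          nrm2 (fun v : ℝ × Z => Θ v.2 * (Φ l v.1 * g v)) := by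
  set D : ℝ := 1 + M ^ 2 with hD
  have hD1 : 1 ≤ D := by nlinarith [sq_nonneg M]
  obtain ⟨j, hj1, hj2⟩ := exists_mem_Ico_zpow (x := D) (y := 2) (by linarith) (by norm_num)
  let kA : ℤ → ℝ → ℝ → ℝ≥0∞ := fun l' σ τ =>
    ENNReal.ofReal (4 / (D + (2 : ℝ) ^ l') * (1 + (σ - τ) ^ 2)⁻¹)
  let kB : ℤ → ℤ → ℝ → ℝ → ℝ≥0∞ := fun l l' _ _ =>
    ENNReal.ofReal (4 / (D + (2 : ℝ) ^ l') * (64 * D / (D ^ 2 + ((2 : ℝ) ^ l) ^ 2)))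
  have mA : ∀ l', Measurable (Function.uncurry (kA l')) := fun l' => by
    simp only [Function.uncurry_def, kA]; fun_prop
  have mB : ∀ l l', Measurable (Function.uncurry (kB l l')) := fun l l' => by
    simp only [Function.uncurry_def, kB]; fun_prop
  let h : ℤ → ℝ × Z → ℝ≥0∞ := fun l' v => Φ l' v.1 * g v
  have mh : ∀ l', Measurable (h l') := fun l' => ((hΦ l').comp measurable_fst).mul hg
  let G : (ℝ → ℝ → ℝ≥0∞) → ℤ → ℤ → ℝ × Z → ℝ≥0∞ := fun k l l' v =>
    Θ v.2 * (shell l).indicator 1 v.1 * ∫⁻ τ in shell l', k v.1 τ * h l' (τ, v.2)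
  have mG : ∀ k l l', Measurable (Function.uncurry k) → Measurable (G k l l') := by
    intro k l l' hk
    have m1 : Measurable (fun v : ℝ × Z => ∫⁻ τ in shell l', k v.1 τ * h l' (τ, v.2)) := by
      refine Measurable.lintegral_prod_right' (f := fun w : (ℝ × Z) × ℝ =>
        k w.1.1 w.2 * h l' (w.2, w.1.2)) ?_
      have : Measurable (fun w : (ℝ × Z) × ℝ => Function.uncurry k (w.1.1, w.2)) :=
        hk.comp (by fun_prop)
      exact this.mul ((mh l').comp (by fun_prop))
    have m2 : Measurable ((shell l).indicator (1 : ℝ → ℝ≥0∞)) :=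
      measurable_one.indicator (measurableSet_shell l)
    exact ((hΘ.comp measurable_snd).mul (m2.comp measurable_fst)).mul m1
  -- split the input into modulation shells; the shells miss only `τ = 0`, a null set
  have hpt : ∀ l v, Θ v.2 * Φ l v.1 *
      ∫⁻ τ, ENNReal.ofReal (kerMaj (a v.2) v.1 τ) * g (τ, v.2) ≤
      ∑' l', (G (kA l') l l' v + G (kB l l') l l' v) := by
    rintro l ⟨σ, z⟩
    dsimp only
    by_cases h0 : Θ z = 0
    · simp [h0]
    by_cases h1 : Φ l σ = 0
    · simp [h1]
    have hσ := hΦs l σ h1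
    have mK : Measurable fun τ => ENNReal.ofReal (kerMaj (a z) σ τ) := by
      unfold kerMaj; fun_prop
    have mgz : Measurable fun τ => g (τ, z) := by fun_prop
    have hJ : ∫⁻ τ, ENNReal.ofReal (kerMaj (a z) σ τ) * g (τ, z) ≤
        ∑' l', ∫⁻ τ in shell l', (kA l' σ τ * h l' (τ, z) + kB l l' σ τ * h l' (τ, z)) := by
      calc ∫⁻ τ, ENNReal.ofReal (kerMaj (a z) σ τ) * g (τ, z)
          ≤ ∫⁻ τ, ∑' l', ENNReal.ofReal (kerMaj (a z) σ τ) * h l' (τ, z) := by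
            refine lintegral_mono_ae ?_
            have : ∀ᵐ τ : ℝ, τ ≠ 0 := Measure.ae_ne volume 0
            filter_upwards [this] with τ hτ
            rw [ENNReal.tsum_mul_left]
            gcongr
            simp only [h]
            rw [ENNReal.tsum_mul_right]
            exact le_mul_of_one_le_left' (hΦsum τ hτ)
        _ = ∑' l', ∫⁻ τ, ENNReal.ofReal (kerMaj (a z) σ τ) * h l' (τ, z) :=
            lintegral_tsum fun l' => (mK.mul
              ((mh l').comp (measurable_id.prodMk measurable_const))).aemeasurable
        _ ≤ _ := by
            refine ENNReal.tsum_le_tsum fun l' => ?_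
            rw [← lintegral_indicator (measurableSet_shell l')]
            refine lintegral_mono fun τ => ?_
            by_cases hτ : τ ∈ shell l'
            · rw [Set.indicator_of_mem hτ, ← add_mul]
              gcongr
              simp only [kA, kB]
              rw [← ENNReal.ofReal_add (by positivity) (by positivity)]
              exact ENNReal.ofReal_le_ofReal
                (kerMaj_le M (a z) σ τ l l' (hΘa z h0).1 (hΘa z h0).2 hσ hτ)
            · have : Φ l' τ = 0 := by
                by_contra hne
                exact hτ (hΦs l' τ hne)
              simp [h, this]
    calc Θ z * Φ l σ * ∫⁻ τ, ENNReal.ofReal (kerMaj (a z) σ τ) * g (τ, z)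
        ≤ Θ z * 1 * ∑' l', ∫⁻ τ in shell l',
          (kA l' σ τ * h l' (τ, z) + kB l l' σ τ * h l' (τ, z)) := by
          gcongr
          exact hΦ1 l σ
      _ = _ := by
          rw [← ENNReal.tsum_mul_left]
          refine tsum_congr fun l' => ?_
          rw [lintegral_add_left]
          · simp only [G, Set.indicator_of_mem hσ, Pi.one_apply]
            rw [mul_add]
          · have : Measurable fun τ => Function.uncurry (kA l') (σ, τ) :=
              (mA l').comp (measurable_const.prodMk measurable_id)
            exact this.mul ((mh l').comp (measurable_id.prodMk measurable_const))
  have hl : ∀ l, ENNReal.ofReal (jbr (M ^ 2 + (2 : ℝ) ^ l) (1 / 2)) *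
        nrm2 (fun v : ℝ × Z => Θ v.2 * Φ l v.1 *
          ∫⁻ τ, ENNReal.ofReal (kerMaj (a v.2) v.1 τ) * g (τ, v.2)) ≤
      ∑' l', (ENNReal.ofReal 256 * ENNReal.ofReal (Real.sqrt (1 / 2) ^ (l - l').natAbs) +
          ENNReal.ofReal 2048 * ENNReal.ofReal (Real.sqrt (1 / 2) ^ (l - j).natAbs)) *
        (ENNReal.ofReal (jbr (M ^ 2 + (2 : ℝ) ^ l') (-(1 / 2))) *
          nrm2 (fun v : ℝ × Z => Θ v.2 * h l' v)) := by
    intro l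
    calc _ ≤ ENNReal.ofReal (jbr (M ^ 2 + (2 : ℝ) ^ l) (1 / 2)) *
          ∑' l', (nrm2 (G (kA l') l l') + nrm2 (G (kB l l') l l')) := by
          gcongr
          refine (nrm2_mono (Filter.Eventually.of_forall (hpt l))).trans ?_
          refine (nrm2_tsum_le fun l' => (mG _ l l' (mA l')).add (mG _ l l' (mB l l'))).trans ?_
          exact ENNReal.tsum_le_tsum fun l' => nrm2_add_le (mG _ l l' (mA l')) (mG _ l l' (mB l l'))
      _ ≤ _ := by
          rw [← ENNReal.tsum_mul_left]
          refine ENNReal.tsum_le_tsum fun l' => ?_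
          obtain ⟨R, R', hR, hR', hRR⟩ := schur_consts_A D hD1 l l'
          obtain ⟨T, T', hT, hT', hTT⟩ := schur_consts_B D j hj1 hj2 l l'
          have sA := schur_term Θ hΘ (kA l') (mA l') (h l') (mh l') (shell l) (shell l')
            (measurableSet_shell l) R R' (measurableSet_shell l') hR hR'
          have sB := schur_term Θ hΘ (kB l l') (mB l l') (h l') (mh l') (shell l) (shell l')
            (measurableSet_shell l) T T' (measurableSet_shell l') hT hT'
          have wA := weighted_schur (M := M) (c := 256) (by norm_num) l l' (l - l').natAbs
            (hRR.trans_eq (by norm_num [hD]))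
          have wB := weighted_schur (M := M) (c := 2048) (by norm_num) l l' (l - j).natAbs
            (hTT.trans_eq (by norm_num [hD]))
          rw [mul_add, add_mul]
          refine add_le_add ?_ ?_
          · calc _ ≤ _ := mul_le_mul_right sA _
              _ = _ := (mul_assoc _ _ _).symm
              _ ≤ _ := mul_le_mul_left wA _
              _ = _ := mul_assoc _ _ _
          · calc _ ≤ _ := mul_le_mul_right sB _
              _ = _ := (mul_assoc _ _ _).symm
              _ ≤ _ := mul_le_mul_left wB _
              _ = _ := mul_assoc _ _ _
  -- sum in `l` first: both geometric factors are summable in `l`, uniformly in `l'` and `j`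
  refine (ENNReal.tsum_le_tsum hl).trans ?_
  rw [ENNReal.tsum_comm, ← ENNReal.tsum_mul_left]
  refine ENNReal.tsum_le_tsum fun l' => ?_
  rw [ENNReal.tsum_mul_right]
  gcongr
  rw [ENNReal.tsum_add, ENNReal.tsum_mul_left, ENNReal.tsum_mul_left, sum_geomQ, sum_geomQ,
    ← add_mul, ← ENNReal.ofReal_add (by norm_num) (by norm_num)]
  norm_num

/-! ### Reduction of the norm estimate to a pointwise bound -/

/-- The shear `(σ, ξ, η) ↦ (σ + ξ³ + η³, ξ, η)` straightening the dispersion relation. -/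
def shear : ℝ × ℝ × ℝ ≃ᵐ ℝ × ℝ × ℝ where
  toFun v := (v.1 + v.2.1 ^ 3 + v.2.2 ^ 3, v.2)
  invFun v := (v.1 - v.2.1 ^ 3 - v.2.2 ^ 3, v.2)
  left_inv v := by ext <;> simp; ring
  right_inv v := by ext <;> simp; ring
  measurable_toFun := by
    simp only [Equiv.coe_fn_mk]; fun_prop
  measurable_invFun := by
    simp only [Equiv.coe_fn_symm_mk]; fun_prop

lemma shear_measurePreserving : MeasurePreserving shear := by
  have h1 : MeasurePreserving (fun p : (ℝ × ℝ) × ℝ => (id p.1, p.2 + (p.1.1 ^ 3 + p.1.2 ^ 3)))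
      (volume.prod volume) (volume.prod volume) := by
    refine (MeasurePreserving.id (volume : Measure (ℝ × ℝ))).skew_product
      (g := fun z x => x + (z.1 ^ 3 + z.2 ^ 3)) ?_ ?_
    · simp only [Function.uncurry_def]; fun_prop
    · exact Filter.Eventually.of_forall fun z => (measurePreserving_add_right volume _).map_eq
  have h2 : MeasurePreserving (Prod.swap : ℝ × (ℝ × ℝ) → (ℝ × ℝ) × ℝ)
      (volume.prod volume) (volume.prod volume) := Measure.measurePreserving_swap
  have h3 : MeasurePreserving (Prod.swap : (ℝ × ℝ) × ℝ → ℝ × (ℝ × ℝ))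
      (volume.prod volume) (volume.prod volume) := Measure.measurePreserving_swap
  have h4 := h3.comp (h1.comp h2)
  have h5 : (shear : ℝ × ℝ × ℝ → ℝ × ℝ × ℝ) = Prod.swap ∘
      (fun p : (ℝ × ℝ) × ℝ => (id p.1, p.2 + (p.1.1 ^ 3 + p.1.2 ^ 3))) ∘ Prod.swap := by
    funext v
    simp [shear, add_assoc]
  rw [h5]
  exact h4

/-- Spatial frequency weight of `P_{N,M}`. -/
def thetaW (χ : ℝ → ℝ) (N M : ℝ) (z : ℝ × ℝ) : ℝ≥0∞ :=
  ‖phiCutD χ N (Real.sqrt (z.1 ^ 2 + z.2 ^ 2)) * phiCutD χ M (z.1 + z.2)‖ₑ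

/-- The localized norm in the straightened frequency variables. -/
lemma PQLnorm_eq (χ : ℝ → ℝ) (N M L : ℝ) (w : ℝ → ℝ → ℝ → ℂ) :
    PQLnorm χ N M L w = nrm2 (fun v : ℝ × ℝ × ℝ => thetaW χ N M v.2 * ‖phiCutD χ L v.1‖ₑ *
      ‖ftt w (v.1 + v.2.1 ^ 3 + v.2.2 ^ 3) v.2.1 v.2.2‖ₑ) := by
  rw [PQLnorm, nrm2, ← shear_measurePreserving.lintegral_comp_emb shear.measurableEmbedding]
  congr 1
  refine lintegral_congr fun v => ?_
  have e : (shear v).1 - (shear v).2.1 ^ 3 - (shear v).2.2 ^ 3 = v.1 := by simp [shear]; ring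
  have e1 : (shear v).1 = v.1 + v.2.1 ^ 3 + v.2.2 ^ 3 := rfl
  have e2 : (shear v).2 = v.2 := rfl
  have key : ∀ (x : ℝ) (c : ℂ), ENNReal.ofReal (x ^ 2 * ‖c‖ ^ 2) = (‖x‖ₑ * ‖c‖ₑ) ^ 2 := by
    intro x c
    rw [← ofReal_norm c, ← ofReal_norm x, ← ENNReal.ofReal_mul (by positivity),
      ← ENNReal.ofReal_pow (by positivity), mul_pow, Real.norm_eq_abs, sq_abs]
  rw [e, e2, e1, key, enorm_mul, thetaW]

lemma phiCutD_enorm_le {χ : ℝ → ℝ} (hχ0 : ∀ t, 0 ≤ χ t) (hχ1 : ∀ t, χ t ≤ 1) (L σ : ℝ) :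
    ‖phiCutD χ L σ‖ₑ ≤ 1 := by
  rw [← ofReal_norm, Real.norm_eq_abs]
  refine ENNReal.ofReal_le_one.2 (abs_le.2 ⟨?_, ?_⟩) <;>
    simp only [phiCutD, phiCut] <;>
    linarith [hχ0 (σ / L), hχ1 (σ / L), hχ0 (2 * (σ / L)), hχ1 (2 * (σ / L))]

lemma phiCutD_ne_zero {χ : ℝ → ℝ} (hχs : Function.support χ ⊆ Set.Ioo (-2) 2)
    (hχ_one : ∀ t ∈ Set.Icc (-1 : ℝ) 1, χ t = 1) (l : ℤ) (σ : ℝ)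
    (h : phiCutD χ ((2 : ℝ) ^ l) σ ≠ 0) : σ ∈ shell l := by
  have hL : (0 : ℝ) < 2 ^ l := by positivity
  have hz : ∀ t, 2 ≤ |t| → χ t = 0 := fun t ht => by
    by_contra hne
    have := abs_lt.2 (Set.mem_Ioo.1 (hχs hne))
    linarith
  have habs : |σ / 2 ^ l| = |σ| / 2 ^ l := by rw [abs_div, abs_of_pos hL]
  refine ⟨?_, ?_⟩ <;> by_contra hc <;> push Not at hc <;> apply h <;> simp only [phiCutD, phiCut]
  · have h1 : |σ / 2 ^ l| < 1 / 2 := by rw [habs, div_lt_iff₀ hL]; linarith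
    have h2 := abs_lt.1 h1
    rw [hχ_one _ ⟨by linarith, by linarith⟩, hχ_one _ ⟨by linarith, by linarith⟩, sub_self]
  · have h1 : 2 ≤ |σ / 2 ^ l| := by rw [habs, le_div_iff₀ hL]; linarith
    rw [hz _ h1, hz, sub_self]
    rw [abs_mul, abs_two]; linarith

/-- The dyadic cutoffs cover `ℝ ∖ {0}`: two consecutive ones already sum to `1`. -/
lemma one_le_tsum_phiCutD {χ : ℝ → ℝ} (hχs : Function.support χ ⊆ Set.Ioo (-2) 2)
    (hχ_one : ∀ t ∈ Set.Icc (-1 : ℝ) 1, χ t = 1) (τ : ℝ) (hτ : τ ≠ 0) :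
    1 ≤ ∑' l : ℤ, ‖phiCutD χ ((2 : ℝ) ^ l) τ‖ₑ := by
  have hτ' : 0 < |τ| := abs_pos.2 hτ
  obtain ⟨j, hj1, hj2⟩ := exists_mem_Ico_zpow (x := |τ|) (y := 2) hτ' (by norm_num)
  have hJ : (0 : ℝ) < 2 ^ j := by positivity
  have e1 : (2 : ℝ) ^ (j + 1) = 2 ^ j * 2 := by rw [zpow_add₀ (by norm_num), zpow_one]
  have hz : ∀ t, 2 ≤ |t| → χ t = 0 := fun t ht => by
    by_contra hne
    have := abs_lt.2 (Set.mem_Ioo.1 (hχs hne))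
    linarith
  have hsum : phiCutD χ (2 ^ j) τ + phiCutD χ (2 ^ (j + 1)) τ = 1 := by
    simp only [phiCutD, phiCut]
    have h1 : 2 * (τ / 2 ^ (j + 1)) = τ / 2 ^ j := by rw [e1]; field_simp
    have h2 : |τ / 2 ^ (j + 1)| ≤ 1 := by
      rw [abs_div, abs_of_pos (a := (2 : ℝ) ^ (j + 1)) (by positivity),
        div_le_one (by positivity)]
      exact hj2.le
    have h3 : 2 ≤ |2 * (τ / 2 ^ j)| := by
      rw [abs_mul, abs_two, abs_div, abs_of_pos hJ]
      have : 1 ≤ |τ| / 2 ^ j := by rwa [one_le_div hJ]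
      linarith
    rw [h1, hz _ h3, hχ_one _ (abs_le.1 h2)]; ring
  calc (1 : ℝ≥0∞) = ‖phiCutD χ (2 ^ j) τ + phiCutD χ (2 ^ (j + 1)) τ‖ₑ := by rw [hsum]; simp
    _ ≤ ‖phiCutD χ (2 ^ j) τ‖ₑ + ‖phiCutD χ (2 ^ (j + 1)) τ‖ₑ := enorm_add_le _ _
    _ = ∑ l ∈ {j, j + 1}, ‖phiCutD χ ((2 : ℝ) ^ l) τ‖ₑ := by
        rw [Finset.sum_pair (by omega)]
    _ ≤ _ := ENNReal.sum_le_tsum _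

/-- Reduction of the `X^{s,b,1}` estimate to a pointwise kernel bound on the Fourier side. -/
lemma Xnorm_le (s : ℝ) (χ : ℝ → ℝ) (hχc : Continuous χ)
    (hχ0 : ∀ t, 0 ≤ χ t) (hχ1 : ∀ t, χ t ≤ 1)
    (hχs : Function.support χ ⊆ Set.Ioo (-2) 2)
    (hχ_one : ∀ t ∈ Set.Icc (-1 : ℝ) 1, χ t = 1) (w F : ℝ → ℝ → ℝ → ℂ) (c : ℝ≥0∞)
    (hF : Measurable fun v : ℝ × ℝ × ℝ => ftt F v.1 v.2.1 v.2.2)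
    (hw : ∀ σ ξ η, ξ + η ≠ 0 → ‖ftt w (σ + ξ ^ 3 + η ^ 3) ξ η‖ₑ ≤
      c * ∫⁻ τ, ENNReal.ofReal (kerMaj ((ξ + η) ^ 2) σ τ) * ‖ftt F (τ + ξ ^ 3 + η ^ 3) ξ η‖ₑ) :
    Xnorm χ s (1 / 2) w ≤ c * (ENNReal.ofReal 2304 * geomQ) * Xnorm χ s (-(1 / 2)) F := by
  have mphi : ∀ N, Continuous (phiCutD χ N) := fun N => by
    unfold phiCutD phiCut; fun_prop
  have mΘ : ∀ N M, Measurable (thetaW χ N M) := fun N M => by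
    have := mphi N
    have := mphi M
    unfold thetaW
    exact Continuous.measurable (by fun_prop)
  let g : ℝ × (ℝ × ℝ) → ℝ≥0∞ := fun v => ‖ftt F (v.1 + v.2.1 ^ 3 + v.2.2 ^ 3) v.2.1 v.2.2‖ₑ
  have mg : Measurable g := (hF.comp shear.measurable).enorm
  have key : ∀ n m : ℤ, ∑' l : ℤ, ENNReal.ofReal
        (jbr ((2 : ℝ) ^ n) s * jbr (((2 : ℝ) ^ m) ^ 2 + (2 : ℝ) ^ l) (1 / 2)) *
          PQLnorm χ ((2 : ℝ) ^ n) ((2 : ℝ) ^ m) ((2 : ℝ) ^ l) w ≤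
      (c * (ENNReal.ofReal 2304 * geomQ)) * ∑' l : ℤ, ENNReal.ofReal
        (jbr ((2 : ℝ) ^ n) s * jbr (((2 : ℝ) ^ m) ^ 2 + (2 : ℝ) ^ l) (-(1 / 2))) *
          PQLnorm χ ((2 : ℝ) ^ n) ((2 : ℝ) ^ m) ((2 : ℝ) ^ l) F := by
    intro n m
    have hj : 0 ≤ jbr ((2 : ℝ) ^ n) s := by unfold jbr; positivity
    simp only [ENNReal.ofReal_mul hj, mul_assoc (ENNReal.ofReal (jbr ((2 : ℝ) ^ n) s)),
      ENNReal.tsum_mul_left]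
    rw [mul_left_comm]
    gcongr
    have hds := dyadic_sum (thetaW χ (2 ^ n) (2 ^ m)) (mΘ _ _) (fun z => (z.1 + z.2) ^ 2)
      ((2 : ℝ) ^ m) ?_ (fun l σ => ‖phiCutD χ ((2 : ℝ) ^ l) σ‖ₑ)
      (fun l => (mphi _).measurable.enorm) (fun l σ => phiCutD_enorm_le hχ0 hχ1 _ _)
      (fun l σ h => phiCutD_ne_zero hχs hχ_one l σ (by simpa using h))
      (fun τ hτ => one_le_tsum_phiCutD hχs hχ_one τ hτ) g mg
    · rw [mul_assoc]
      refine le_trans ?_ (mul_le_mul_right (hds.trans_eq ?_) c)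
      · rw [← ENNReal.tsum_mul_left]
        refine ENNReal.tsum_le_tsum fun l => ?_
        rw [mul_left_comm]
        gcongr
        rw [PQLnorm_eq]
        have hc : ∀ G : ℝ × ℝ × ℝ → ℝ≥0∞, Measurable G →
            nrm2 (fun v => c * G v) = c * nrm2 G := by
          intro G hG
          simp only [nrm2, mul_pow]
          rw [lintegral_const_mul _ (hG.pow_const 2), ENNReal.mul_rpow_of_nonneg _ _ (by norm_num)]
          congr 1
          rw [← ENNReal.rpow_natCast, ← ENNReal.rpow_mul]; norm_num
        rw [← hc]
        · refine nrm2_mono (Filter.Eventually.of_forall fun v => ?_)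
          -- the exceptional line `ξ + η = 0` is invisible, since `φ_M(0) = 0`
          by_cases hv : v.2.1 + v.2.2 = 0
          · have : thetaW χ (2 ^ n) (2 ^ m) v.2 = 0 := by
              have h0 : χ 0 = 1 := hχ_one 0 (by norm_num)
              simp [thetaW, hv, phiCutD, phiCut, h0]
            simp [this]
          · calc _ ≤ _ := mul_le_mul_right (hw v.1 v.2.1 v.2.2 hv) _
              _ = _ := mul_left_comm _ _ _
        · refine ((mΘ _ _).comp measurable_snd |>.mul
            ((mphi _).measurable.enorm.comp measurable_fst)).mul ?_
          refine Measurable.lintegral_prod_right' (f := fun w : (ℝ × ℝ × ℝ) × ℝ =>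
            ENNReal.ofReal (kerMaj ((w.1.2.1 + w.1.2.2) ^ 2) w.1.1 w.2) * g (w.2, w.1.2)) ?_
          refine Measurable.mul ?_ (mg.comp (by fun_prop))
          unfold kerMaj
          fun_prop
      · congr 1
        refine tsum_congr fun l => ?_
        rw [PQLnorm_eq]
        simp only [mul_assoc, g]
    · intro z hz
      have hz' : phiCutD χ (2 ^ m) (z.1 + z.2) ≠ 0 := by
        intro h0
        exact hz (by simp [thetaW, h0])
      obtain ⟨h1, h2⟩ := phiCutD_ne_zero hχs hχ_one m _ hz'
      have hM : (0 : ℝ) < 2 ^ m := by positivity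
      rw [← sq_abs (z.1 + z.2)]
      constructor <;> nlinarith
  rw [Xnorm, Xnorm]
  have hcc : ∀ x : ℝ≥0∞, x = (x ^ 2) ^ ((1 : ℝ) / 2) := fun x => by
    rw [← ENNReal.rpow_natCast, ← ENNReal.rpow_mul]; norm_num
  rw [hcc (c * (ENNReal.ofReal 2304 * geomQ)), ← ENNReal.mul_rpow_of_nonneg _ _ (by norm_num)]
  refine ENNReal.rpow_le_rpow ?_ (by norm_num)
  rw [← ENNReal.tsum_mul_left]
  refine ENNReal.tsum_le_tsum fun n => ?_
  rw [← ENNReal.tsum_mul_left]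
  refine ENNReal.tsum_le_tsum fun m => ?_
  rw [← mul_pow]
  exact pow_le_pow_left' (key n m) 2

open scoped FourierTransform SchwartzMap

/-! ### The Fourier transform on Schwartz functions of three variables -/

/-- `ℝ³` with its Euclidean structure, as an iterated `L²` product. -/
abbrev E3 := WithLp 2 (ℝ × WithLp 2 (ℝ × ℝ))

/-- The identification of `E3` with `ℝ × ℝ × ℝ`. -/
def e3 : E3 ≃L[ℝ] ℝ × ℝ × ℝ :=
  (WithLp.prodContinuousLinearEquiv 2 ℝ ℝ (WithLp 2 (ℝ × ℝ))).trans
    ((ContinuousLinearEquiv.refl ℝ ℝ).prodCongr (WithLp.prodContinuousLinearEquiv 2 ℝ ℝ ℝ))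

lemma e3_measurePreserving : MeasurePreserving e3 := by
  have h1 : MeasurePreserving (Prod.map id (@WithLp.ofLp 2 (ℝ × ℝ))) (volume.prod volume)
      (volume.prod volume) :=
    (MeasurePreserving.id (volume : Measure ℝ)).prod (WithLp.volume_preserving_ofLp ℝ ℝ)
  exact h1.comp (WithLp.volume_preserving_ofLp ℝ (WithLp 2 (ℝ × ℝ)))

lemma inner_e3 (u v : E3) : inner ℝ u v =
    (e3 u).1 * (e3 v).1 + (e3 u).2.1 * (e3 v).2.1 + (e3 u).2.2 * (e3 v).2.2 := by
  rw [WithLp.prod_inner_apply, WithLp.prod_inner_apply]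
  simp [e3]
  ring

lemma integral_triple {G : ℝ × ℝ × ℝ → ℂ} (hG : Integrable G) :
    ∫ v, G v = ∫ t, ∫ x, ∫ y, G (t, x, y) := by
  rw [Measure.volume_eq_prod] at hG ⊢
  rw [integral_prod _ hG]
  refine integral_congr_ae ?_
  filter_upwards [hG.prod_right_ae] with t ht
  rw [Measure.volume_eq_prod] at ht ⊢
  exact integral_prod _ ht

lemma ftt_eq_integral {G : ℝ × ℝ × ℝ → ℂ} (hG : Integrable G) (τ ξ η : ℝ) :
    ftt (fun t x y => G (t, x, y)) τ ξ η = ∫ v : ℝ × ℝ × ℝ,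
      Complex.exp (-Complex.I * ((v.1 * τ + v.2.1 * ξ + v.2.2 * η : ℝ) : ℂ)) * G v := by
  rw [ftt]
  refine (integral_triple (G := fun v : ℝ × ℝ × ℝ =>
    Complex.exp (-Complex.I * ((v.1 * τ + v.2.1 * ξ + v.2.2 * η : ℝ) : ℂ)) * G v) ?_).symm
  refine hG.bdd_mul (c := 1) (Continuous.aestronglyMeasurable (by fun_prop)) ?_
  exact Filter.Eventually.of_forall fun v => (norm_exp_negI _).le

lemma ftt_eq_fourier (u : 𝓢(E3, ℂ)) (w : E3) :
    ftt (fun t x y => u (e3.symm (t, x, y))) (2 * Real.pi * (e3 w).1) (2 * Real.pi * (e3 w).2.1)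
      (2 * Real.pi * (e3 w).2.2) = 𝓕 u w := by
  have hint : Integrable (fun v : ℝ × ℝ × ℝ => u (e3.symm v)) := by
    rw [← e3_measurePreserving.integrable_comp_emb e3.toHomeomorph.measurableEmbedding]
    simpa [Function.comp_def] using u.integrable
  rw [ftt_eq_integral hint, SchwartzMap.fourier_coe, Real.fourier_eq',
    ← e3_measurePreserving.integral_comp e3.toHomeomorph.measurableEmbedding]
  refine integral_congr_ae (Filter.Eventually.of_forall fun v => ?_)
  simp only [inner_e3, ContinuousLinearEquiv.symm_apply_apply, smul_eq_mul]
  congr 2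
  push_cast
  ring

/-- Dilation by `2π`, which converts between the two normalizations of the Fourier transform. -/
def dil : (ℝ × ℝ × ℝ) ≃L[ℝ] ℝ × ℝ × ℝ :=
  ContinuousLinearEquiv.smulLeft (Units.mk0 (2 * Real.pi) (by positivity))

lemma dil_apply (v : ℝ × ℝ × ℝ) : dil v = (2 * Real.pi) • v := rfl

/-- `ftt` maps the Schwartz class into itself. -/
lemma exists_ftt (u : 𝓢(ℝ × ℝ × ℝ, ℂ)) :
    ∃ f : 𝓢(ℝ × ℝ × ℝ, ℂ), ∀ τ ξ η, f (τ, ξ, η) = ftt (fun t x y => u (t, x, y)) τ ξ η := by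
  let uE : 𝓢(E3, ℂ) := SchwartzMap.compCLMOfContinuousLinearEquiv ℂ e3 u
  refine ⟨SchwartzMap.compCLMOfContinuousLinearEquiv ℂ (dil.symm.trans e3.symm) (𝓕 uE),
    fun τ ξ η => ?_⟩
  have h := ftt_eq_fourier uE (e3.symm (dil.symm (τ, ξ, η)))
  have h2 : (2 * Real.pi) • dil.symm (τ, ξ, η) = (τ, ξ, η) := dil.apply_symm_apply (τ, ξ, η)
  have h3 := congrArg Prod.fst h2
  have h4 := congrArg (fun v => v.2.1) h2
  have h5 := congrArg (fun v => v.2.2) h2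
  simp only [Prod.smul_fst, Prod.smul_snd, smul_eq_mul] at h3 h4 h5
  simp only [ContinuousLinearEquiv.apply_symm_apply, h3, h4, h5] at h
  simp only [SchwartzMap.compCLMOfContinuousLinearEquiv_apply, Function.comp_apply,
    ContinuousLinearEquiv.trans_apply]
  rw [← h]
  simp [uE]

/-- `ftt` maps the Schwartz class onto itself. -/
lemma exists_ftt_eq (f : 𝓢(ℝ × ℝ × ℝ, ℂ)) :
    ∃ h : 𝓢(ℝ × ℝ × ℝ, ℂ), ∀ τ ξ η, ftt (fun t x y => h (t, x, y)) τ ξ η = f (τ, ξ, η) := by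
  let g : 𝓢(E3, ℂ) := SchwartzMap.compCLMOfContinuousLinearEquiv ℂ (e3.trans dil) f
  refine ⟨SchwartzMap.compCLMOfContinuousLinearEquiv ℂ e3.symm (𝓕⁻ g), fun τ ξ η => ?_⟩
  have h := ftt_eq_fourier (𝓕⁻ g) (e3.symm (dil.symm (τ, ξ, η)))
  have h2 : (2 * Real.pi) • dil.symm (τ, ξ, η) = (τ, ξ, η) := dil.apply_symm_apply (τ, ξ, η)
  have h3 := congrArg Prod.fst h2
  have h4 := congrArg (fun v => v.2.1) h2
  have h5 := congrArg (fun v => v.2.2) h2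
  simp only [Prod.smul_fst, Prod.smul_snd, smul_eq_mul] at h3 h4 h5
  simp only [ContinuousLinearEquiv.apply_symm_apply, h3, h4, h5] at h
  simp only [SchwartzMap.compCLMOfContinuousLinearEquiv_apply, Function.comp_apply]
  rw [h, FourierTransform.fourier_fourierInv_eq]
  simp [g]

lemma schwartz_decay (u : 𝓢(ℝ × ℝ × ℝ, ℂ)) : ∃ C : ℝ, 0 ≤ C ∧ ∀ t x y,
    ‖u (t, x, y)‖ ≤ C * ((1 + t ^ 2)⁻¹ * (1 + x ^ 2)⁻¹ * (1 + y ^ 2)⁻¹) := by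
  refine ⟨2 ^ 6 * ((Finset.Iic ((6, 0) : ℕ × ℕ)).sup
    fun m => SchwartzMap.seminorm ℝ m.1 m.2) u, by positivity, fun t x y => ?_⟩
  have h := SchwartzMap.one_add_le_sup_seminorm_apply (𝕜 := ℝ) (m := (6, 0)) (k := 6) (n := 0)
    le_rfl le_rfl u (t, x, y)
  rw [norm_iteratedFDeriv_zero] at h
  have hb : ∀ r : ℝ, |r| ≤ ‖(t, x, y)‖ → 1 + r ^ 2 ≤ (1 + ‖(t, x, y)‖) ^ 2 := by
    intro r hr
    have h0 := abs_nonneg r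
    rw [← sq_abs r]
    nlinarith
  have h1 : |t| ≤ ‖(t, x, y)‖ := norm_fst_le (t, x, y)
  have h2 : ‖(x, y)‖ ≤ ‖(t, x, y)‖ := norm_snd_le (t, x, y)
  have h3 : |x| ≤ ‖(t, x, y)‖ := (norm_fst_le (x, y)).trans h2
  have h4 : |y| ≤ ‖(t, x, y)‖ := (norm_snd_le (x, y)).trans h2
  rw [← mul_inv, ← mul_inv, ← div_eq_mul_inv, le_div_iff₀ (by positivity), mul_comm]
  refine le_trans ?_ h
  gcongr
  calc (1 + t ^ 2) * (1 + x ^ 2) * (1 + y ^ 2) ≤ (1 + ‖(t, x, y)‖) ^ 2 * (1 + ‖(t, x, y)‖) ^ 2 *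
        (1 + ‖(t, x, y)‖) ^ 2 := by
        gcongr
        · exact hb t h1
        · exact hb x h3
        · exact hb y h4
    _ = _ := by ring

lemma hasTemperateGrowth_expI :
    Function.HasTemperateGrowth (fun x : ℝ => Complex.exp (Complex.I * (x : ℂ))) := by
  have hd : ∀ (n : ℕ), iteratedDeriv n (fun x : ℝ => Complex.exp (Complex.I * (x : ℂ))) =
      fun x : ℝ => Complex.I ^ n * Complex.exp (Complex.I * (x : ℂ)) := by
    intro n
    induction n with
    | zero => simp
    | succ n ih =>
      rw [iteratedDeriv_succ, ih]
      funext x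
      have h1 : HasDerivAt (fun x : ℝ => Complex.I * (x : ℂ)) (Complex.I * 1) x :=
        (Complex.ofRealCLM.hasDerivAt (x := x)).const_mul Complex.I
      have := (h1.cexp.const_mul (Complex.I ^ n)).deriv
      rw [this]; ring
  refine ⟨?_, fun n => ⟨0, 1, fun x => ?_⟩⟩
  · exact Complex.contDiff_exp.comp (contDiff_const.mul Complex.ofRealCLM.contDiff)
  · rw [norm_iteratedFDeriv_eq_norm_iteratedDeriv, hd]
    simp [Complex.norm_exp]

/-- The free evolution at time `t`, transported to the straightened variables, preserves the
Schwartz class. -/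
lemma exists_sheared (u : 𝓢(ℝ × ℝ × ℝ, ℂ)) (t : ℝ) :
    ∃ f : 𝓢(ℝ × ℝ × ℝ, ℂ), ∀ τ ξ η, f (τ, ξ, η) =
      Complex.exp (Complex.I * ((t * (ξ ^ 3 + η ^ 3) : ℝ) : ℂ)) *
        u (τ + ξ ^ 3 + η ^ 3, ξ, η) := by
  let L1 : ℝ × ℝ × ℝ →L[ℝ] ℝ := ContinuousLinearMap.fst ℝ ℝ (ℝ × ℝ)
  let L2 : ℝ × ℝ × ℝ →L[ℝ] ℝ :=
    (ContinuousLinearMap.fst ℝ ℝ ℝ).comp (ContinuousLinearMap.snd ℝ ℝ (ℝ × ℝ))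
  let L3 : ℝ × ℝ × ℝ →L[ℝ] ℝ :=
    (ContinuousLinearMap.snd ℝ ℝ ℝ).comp (ContinuousLinearMap.snd ℝ ℝ (ℝ × ℝ))
  have hp : Function.HasTemperateGrowth (fun v : ℝ × ℝ × ℝ => v.2.1 ^ 3 + v.2.2 ^ 3) :=
    (L2.hasTemperateGrowth.pow 3).add (L3.hasTemperateGrowth.pow 3)
  have he : Function.HasTemperateGrowth (fun v : ℝ × ℝ × ℝ =>
      Complex.exp (Complex.I * ((t * (v.2.1 ^ 3 + v.2.2 ^ 3) : ℝ) : ℂ))) :=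
    hasTemperateGrowth_expI.comp ((Function.HasTemperateGrowth.const t).mul hp)
  have hs : Function.HasTemperateGrowth (fun v : ℝ × ℝ × ℝ =>
      v + ContinuousLinearMap.inl ℝ ℝ (ℝ × ℝ) (v.2.1 ^ 3 + v.2.2 ^ 3)) :=
    Function.HasTemperateGrowth.id.add
      ((ContinuousLinearMap.inl ℝ ℝ (ℝ × ℝ)).hasTemperateGrowth.comp hp)
  have hup : ∃ (k : ℕ) (C : ℝ), ∀ v : ℝ × ℝ × ℝ, ‖v‖ ≤
      C * (1 + ‖v + ContinuousLinearMap.inl ℝ ℝ (ℝ × ℝ) (v.2.1 ^ 3 + v.2.2 ^ 3)‖) ^ k := by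
    refine ⟨3, 3, fun v => ?_⟩
    obtain ⟨a, b, c⟩ := v
    set q : ℝ × ℝ × ℝ := (a, b, c) +
      ContinuousLinearMap.inl ℝ ℝ (ℝ × ℝ) ((a, b, c).2.1 ^ 3 + (a, b, c).2.2 ^ 3) with hq
    have hq' : q = (a + (b ^ 3 + c ^ 3), b, c) := by simp [hq]
    have h1 : |a + (b ^ 3 + c ^ 3)| ≤ ‖q‖ := by rw [hq']; exact norm_fst_le ((a + (b ^ 3 + c ^ 3), b, c) : ℝ × ℝ × ℝ)
    have h2 : ‖(b, c)‖ ≤ ‖q‖ := by rw [hq']; exact norm_snd_le ((a + (b ^ 3 + c ^ 3), b, c) : ℝ × ℝ × ℝ)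
    have h3 : |b| ≤ ‖q‖ := (norm_fst_le (b, c)).trans h2
    have h4 : |c| ≤ ‖q‖ := (norm_snd_le (b, c)).trans h2
    have h5 : ∀ r : ℝ, |r| ≤ ‖q‖ → |r ^ 3| ≤ ‖q‖ ^ 3 := fun r hr => by
      rw [abs_pow]; gcongr
    have h6 := abs_le.1 (h5 b h3)
    have h7 := abs_le.1 (h5 c h4)
    have h8 := abs_le.1 h1
    have hq0 := norm_nonneg q
    have h9 : ‖q‖ + 2 * ‖q‖ ^ 3 ≤ 3 * (1 + ‖q‖) ^ 3 := by
      nlinarith [pow_nonneg hq0 2, pow_nonneg hq0 3]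
    have h10 : ‖q‖ ≤ ‖q‖ + 2 * ‖q‖ ^ 3 := by nlinarith [pow_nonneg hq0 3]
    refine (norm_prod_le_iff.2 ⟨?_, ?_⟩).trans h9
    · exact abs_le.2 ⟨by linarith, by linarith⟩
    · exact h2.trans h10
  refine ⟨SchwartzMap.smulLeftCLM ℂ (fun v : ℝ × ℝ × ℝ =>
      Complex.exp (Complex.I * ((t * (v.2.1 ^ 3 + v.2.2 ^ 3) : ℝ) : ℂ)))
      (SchwartzMap.compCLM ℂ hs hup u), fun τ ξ η => ?_⟩
  rw [SchwartzMap.smulLeftCLM_apply_apply he, SchwartzMap.compCLM_apply]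
  simp [add_assoc]

/-! ### Fourier inversion -/

/-- Fourier inversion in the normalization without `2π` in the exponent. -/
lemma inversion_gen {V : Type*} [NormedAddCommGroup V] [InnerProductSpace ℝ V]
    [FiniteDimensional ℝ V] [MeasurableSpace V] [BorelSpace V] {f : V → ℂ} (hc : Continuous f)
    (hi : Integrable f)
    (hk : Integrable fun w : V => ∫ v, Complex.exp (-Complex.I * ((inner ℝ v w : ℝ) : ℂ)) * f v)
    (x : V) :
    ∫ w : V, Complex.exp (Complex.I * ((inner ℝ w x : ℝ) : ℂ)) *
        ∫ v, Complex.exp (-Complex.I * ((inner ℝ v w : ℝ) : ℂ)) * f v =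
      (2 * Real.pi : ℂ) ^ (Module.finrank ℝ V) * f x := by
  set K : V → ℂ := fun w => ∫ v, Complex.exp (-Complex.I * ((inner ℝ v w : ℝ) : ℂ)) * f v with hK
  have h2π : (2 * Real.pi : ℝ) ≠ 0 := by positivity
  have hF : ∀ w, 𝓕 f w = K ((2 * Real.pi) • w) := by
    intro w
    rw [Real.fourier_eq']
    refine integral_congr_ae (Filter.Eventually.of_forall fun v => ?_)
    simp only [inner_smul_right, smul_eq_mul]
    congr 2
    push_cast
    ring
  have hFi : Integrable (𝓕 f) := by
    rw [funext hF]
    exact (integrable_comp_smul_iff volume K h2π).2 hk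
  have h := congrFun (hc.fourierInv_fourier_eq hi hFi) x
  rw [Real.fourierInv_eq'] at h
  have h3 : ∫ w : V, Complex.exp (((2 * Real.pi * inner ℝ w x : ℝ) : ℂ) * Complex.I) • 𝓕 f w =
      ∫ w : V, (fun w => Complex.exp (Complex.I * ((inner ℝ w x : ℝ) : ℂ)) * K w)
        ((2 * Real.pi) • w) := by
    refine integral_congr_ae (Filter.Eventually.of_forall fun w => ?_)
    simp only [hF, inner_smul_left, smul_eq_mul]
    congr 2
    simp
    ring
  rw [h3, Measure.integral_comp_smul volume
    (fun w => Complex.exp (Complex.I * ((inner ℝ w x : ℝ) : ℂ)) * K w)] at h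
  change ∫ w : V, Complex.exp (Complex.I * ((inner ℝ w x : ℝ) : ℂ)) * K w = _
  generalize (∫ w : V, Complex.exp (Complex.I * ((inner ℝ w x : ℝ) : ℂ)) * K w) = J at h ⊢
  rw [← h, abs_of_pos (by positivity), Complex.real_smul]
  push_cast
  have : (2 * (Real.pi : ℂ)) ≠ 0 := by exact_mod_cast h2π
  field_simp

lemma inversion_one {f : ℝ → ℂ} (hc : Continuous f) (hi : Integrable f)
    (hk : Integrable fun τ : ℝ => ∫ s : ℝ, Complex.exp (-Complex.I * ((s * τ : ℝ) : ℂ)) * f s)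
    (r : ℝ) :
    ∫ τ : ℝ, Complex.exp (Complex.I * ((r * τ : ℝ) : ℂ)) *
        ∫ s : ℝ, Complex.exp (-Complex.I * ((s * τ : ℝ) : ℂ)) * f s = 2 * Real.pi * f r := by
  have e : ∀ s τ : ℝ, inner ℝ s τ = s * τ := fun s τ => by
    rw [real_inner_comm]; simp
  have := inversion_gen hc hi (by simpa only [e] using hk) r
  simp only [e, Module.finrank_self, pow_one] at this
  rw [← this]
  refine integral_congr_ae (Filter.Eventually.of_forall fun τ => ?_)
  simp only [mul_comm r τ]

lemma fxy2_eq_integral {H : ℝ × ℝ → ℂ} (hi : Integrable H) (ξ η : ℝ) :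
    fxy2 (fun x y => H (x, y)) ξ η = ∫ z : ℝ × ℝ,
      Complex.exp (-Complex.I * ((z.1 * ξ + z.2 * η : ℝ) : ℂ)) * H z := by
  rw [fxy2, Measure.volume_eq_prod, integral_prod]
  refine (Measure.volume_eq_prod ℝ ℝ ▸ hi).bdd_mul (c := 1)
    (Continuous.aestronglyMeasurable (by fun_prop)) ?_
  exact Filter.Eventually.of_forall fun v => (norm_exp_negI _).le

lemma inversion_two {H : ℝ × ℝ → ℂ} (hc : Continuous H) (hi : Integrable H)
    (hk : Integrable fun z : ℝ × ℝ => fxy2 (fun x y => H (x, y)) z.1 z.2) (x y : ℝ) :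
    ∫ ξ : ℝ, ∫ η : ℝ, Complex.exp (Complex.I * ((x * ξ + y * η : ℝ) : ℂ)) *
      fxy2 (fun x y => H (x, y)) ξ η = (2 * Real.pi) ^ 2 * H (x, y) := by
  have hp := WithLp.volume_preserving_ofLp ℝ ℝ
  have he : MeasurableEmbedding (@WithLp.ofLp 2 (ℝ × ℝ)) :=
    (WithLp.prodContinuousLinearEquiv 2 ℝ ℝ ℝ).toHomeomorph.measurableEmbedding
  have hcc : Continuous (@WithLp.ofLp 2 (ℝ × ℝ)) :=
    (WithLp.prodContinuousLinearEquiv 2 ℝ ℝ ℝ).continuous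
  have hin : ∀ v w : WithLp 2 (ℝ × ℝ), inner ℝ v w =
      (WithLp.ofLp v).1 * (WithLp.ofLp w).1 + (WithLp.ofLp v).2 * (WithLp.ofLp w).2 := by
    intro v w
    rw [WithLp.prod_inner_apply]
    simp
    ring
  have hft : ∀ w : WithLp 2 (ℝ × ℝ), ∫ v : WithLp 2 (ℝ × ℝ),
      Complex.exp (-Complex.I * ((inner ℝ v w : ℝ) : ℂ)) * H (WithLp.ofLp v) =
      fxy2 (fun x y => H (x, y)) (WithLp.ofLp w).1 (WithLp.ofLp w).2 := by
    intro w
    rw [fxy2_eq_integral hi, ← hp.integral_comp he]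
    simp only [hin]
  have hk' : Integrable fun w : WithLp 2 (ℝ × ℝ) =>
      fxy2 (fun x y => H (x, y)) (WithLp.ofLp w).1 (WithLp.ofLp w).2 :=
    (hp.integrable_comp_emb he).2 hk
  have h := inversion_gen (f := fun v : WithLp 2 (ℝ × ℝ) => H (WithLp.ofLp v)) (hc.comp hcc)
    ((hp.integrable_comp_emb he).2 hi) (by simpa only [hft] using hk') (WithLp.toLp 2 (x, y))
  simp only [hft] at h
  simp only [hin] at h
  have hfr : Module.finrank ℝ (WithLp 2 (ℝ × ℝ)) = 2 := by
    rw [LinearEquiv.finrank_eq (WithLp.linearEquiv 2 ℝ (ℝ × ℝ))]; simp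
  rw [hfr] at h
  rw [← h]
  have h4 : Integrable fun z : ℝ × ℝ => Complex.exp (Complex.I * ((x * z.1 + y * z.2 : ℝ) : ℂ)) *
      fxy2 (fun x y => H (x, y)) z.1 z.2 :=
    hk.bdd_mul (c := 1) (Continuous.aestronglyMeasurable (by fun_prop))
      (Filter.Eventually.of_forall fun v => (norm_exp_posI _).le)
  rw [hp.integral_comp he (fun z : ℝ × ℝ => Complex.exp (Complex.I *
    ((z.1 * x + z.2 * y : ℝ) : ℂ)) * fxy2 (fun x y => H (x, y)) z.1 z.2)]
  simp only [mul_comm x, mul_comm y] at h4 ⊢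
  rw [Measure.volume_eq_prod] at h4 ⊢
  exact (integral_prod _ h4).symm

/-! ### Superpositions and diagonal translations -/

/-- A superposition `∫ q(α, ·) dμ(α)` of continuous integrable functions, with integrable control
of both the sup norms and the `L¹` norms, is continuous and integrable, and its Fourier transform
is the superposition of the Fourier transforms. -/
lemma superposition {A : Type*} [MeasurableSpace A] {μ : Measure A} [SFinite μ]
    {q : A → ℝ × ℝ → ℂ} {Q : A → ℝ} (hm : AEStronglyMeasurable (Function.uncurry q) (μ.prod volume))
    (hm' : ∀ z, AEStronglyMeasurable (fun α => q α z) μ)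
    (hc : ∀ α, Continuous (q α)) (hb : ∀ α z, ‖q α z‖ ≤ Q α) (hi : ∀ α, Integrable (q α))
    (hI : ∀ α, ∫ z, ‖q α z‖ ≤ Q α) (hQ : Integrable Q μ) :
    Continuous (fun z => ∫ α, q α z ∂μ) ∧ Integrable (fun z => ∫ α, q α z ∂μ) ∧
      ∀ ξ η, fxy2 (fun x y => ∫ α, q α (x, y) ∂μ) ξ η =
        ∫ α, fxy2 (fun x y => q α (x, y)) ξ η ∂μ := by
  have hint : Integrable (Function.uncurry q) (μ.prod volume) := by
    rw [integrable_prod_iff hm]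
    refine ⟨Filter.Eventually.of_forall hi, hQ.mono' hm.norm.integral_prod_right' ?_⟩
    refine Filter.Eventually.of_forall fun α => ?_
    rw [Real.norm_of_nonneg (integral_nonneg fun z => norm_nonneg _)]
    exact hI α
  have hint2 : Integrable (fun z => ∫ α, q α z ∂μ) := hint.integral_prod_right
  refine ⟨?_, hint2, ?_⟩
  · exact continuous_of_dominated hm' (fun z => Filter.Eventually.of_forall fun α => hb α z) hQ
      (Filter.Eventually.of_forall hc)
  · intro ξ η
    rw [fxy2_eq_integral hint2]
    have : ∀ α, fxy2 (fun x y => q α (x, y)) ξ η = ∫ z : ℝ × ℝ,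
      Complex.exp (-Complex.I * ((z.1 * ξ + z.2 * η : ℝ) : ℂ)) * q α z :=
        fun α => fxy2_eq_integral (hi α) ξ η
    simp only [this]
    simp only [← integral_const_mul]
    rw [integral_integral_swap]
    have hs := hint.swap
    refine hs.bdd_mul (c := 1) (f := fun p : (ℝ × ℝ) × A =>
      Complex.exp (-Complex.I * ((p.1.1 * ξ + p.1.2 * η : ℝ) : ℂ)))
      (Measurable.aestronglyMeasurable (by fun_prop)) ?_
    exact Filter.Eventually.of_forall fun v => (norm_exp_negI _).le

/-- The Gaussian `e^{-ru²}` as a superposition of characters. -/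
lemma gaussian_superposition (r u : ℝ) (hr : 0 ≤ r) :
    ∫ ζ : ℝ, ((Real.exp (-ζ ^ 2) : ℝ) : ℂ) *
      Complex.exp (-Complex.I * ((2 * Real.sqrt r * ζ * u : ℝ) : ℂ)) =
      (Real.sqrt Real.pi : ℂ) * Complex.exp ((-r * u ^ 2 : ℝ) : ℂ) := by
  have h := fourierIntegral_gaussian (b := 1) (by simp) (-(2 * Real.sqrt r * u : ℝ) : ℂ)
  have h1 : ((Real.pi : ℂ) / 1) ^ (1 / 2 : ℂ) = (Real.sqrt Real.pi : ℂ) := by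
    rw [div_one, Real.sqrt_eq_rpow, Complex.ofReal_cpow Real.pi_pos.le]
    norm_num
  rw [h1] at h
  rw [show ((-r * u ^ 2 : ℝ) : ℂ) = -(-((2 * Real.sqrt r * u : ℝ) : ℂ)) ^ 2 / (4 * 1) by
    rw [show ((-r * u ^ 2 : ℝ) : ℂ) = ((-(Real.sqrt r)^2 * u ^ 2 : ℝ) : ℂ) by
      rw [Real.sq_sqrt hr]]
    push_cast; ring]
  rw [← h]
  refine integral_congr_ae (Filter.Eventually.of_forall fun ζ => ?_)
  simp only
  rw [mul_comm]
  congr 1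
  · congr 1; push_cast; ring
  · push_cast; congr 1; ring

/-- A translation along the diagonal multiplies the Fourier transform by a character of `ξ + η`. -/
lemma fxy2_translate (f : ℝ → ℝ → ℂ) (k ξ η : ℝ) :
    fxy2 (fun x y => f (x - k) (y - k)) ξ η =
      Complex.exp (-Complex.I * ((k * (ξ + η) : ℝ) : ℂ)) * fxy2 f ξ η := by
  have h1 : ∀ x, ∫ y : ℝ, Complex.exp (-Complex.I * ((x * ξ + y * η : ℝ) : ℂ)) * f (x - k) (y - k) =
      (fun x' => ∫ y : ℝ, Complex.exp (-Complex.I * (((x' + k) * ξ + (y + k) * η : ℝ) : ℂ)) *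
        f x' y) (x - k) := by
    intro x
    simp only
    rw [← integral_sub_right_eq_self (fun y : ℝ =>
      Complex.exp (-Complex.I * (((x - k + k) * ξ + (y + k) * η : ℝ) : ℂ)) * f (x - k) y) k]
    simp
  simp only [fxy2, h1]
  rw [integral_sub_right_eq_self (fun x' => ∫ y : ℝ, Complex.exp (-Complex.I *
    (((x' + k) * ξ + (y + k) * η : ℝ) : ℂ)) * f x' y) k]
  simp only [← integral_const_mul]
  congr 1; ext x; congr 1; ext y
  rw [← mul_assoc, ← Complex.exp_add]
  congr 2
  push_cast; ring

/-! ### Spatial slices -/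

lemma integral_cauchy2 : Integrable (fun z : ℝ × ℝ => (1 + z.1 ^ 2)⁻¹ * (1 + z.2 ^ 2)⁻¹) ∧
    ∫ z : ℝ × ℝ, (1 + z.1 ^ 2)⁻¹ * (1 + z.2 ^ 2)⁻¹ = Real.pi ^ 2 := by
  constructor
  · exact integrable_inv_one_add_sq.mul_prod integrable_inv_one_add_sq
  · rw [Measure.volume_eq_prod, integral_prod_mul (fun x : ℝ => (1 + x ^ 2)⁻¹)
      (fun x : ℝ => (1 + x ^ 2)⁻¹), integral_univ_inv_one_add_sq]
    ring

/-- Bounds on the slices `h(r, ·)` of a Schwartz function and on their Fourier transforms, all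
integrable in `r`. -/
lemma slice (h : 𝓢(ℝ × ℝ × ℝ, ℂ)) : ∃ C, 0 ≤ C ∧ (∀ r z, ‖h (r, z)‖ ≤ C * (1 + r ^ 2)⁻¹) ∧
    (∀ r, Integrable fun z : ℝ × ℝ => h (r, z)) ∧
    (∀ r, ∫ z : ℝ × ℝ, ‖h (r, z)‖ ≤ C * (1 + r ^ 2)⁻¹) ∧
    (∀ r ξ η, ‖fxy2 (fun x y => h (r, x, y)) ξ η‖ ≤ C * (1 + r ^ 2)⁻¹) ∧
    ∀ ξ η, Continuous fun r => fxy2 (fun x y => h (r, x, y)) ξ η := by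
  obtain ⟨C, hC, hd⟩ := schwartz_decay h
  have hpi : (1 : ℝ) ≤ Real.pi ^ 2 := by nlinarith [Real.pi_gt_three]
  have hI : ∀ r, Integrable fun z : ℝ × ℝ => h (r, z) := by
    intro r
    refine (integral_cauchy2.1.const_mul (C * (1 + r ^ 2)⁻¹)).mono'
      (Continuous.aestronglyMeasurable (by fun_prop)) (Filter.Eventually.of_forall fun z => ?_)
    exact (hd r z.1 z.2).trans_eq (by ring)
  have hN : ∀ r, ∫ z : ℝ × ℝ, ‖h (r, z)‖ ≤ C * Real.pi ^ 2 * (1 + r ^ 2)⁻¹ := by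
    intro r
    calc ∫ z : ℝ × ℝ, ‖h (r, z)‖ ≤ ∫ z : ℝ × ℝ,
          (C * (1 + r ^ 2)⁻¹) * ((1 + z.1 ^ 2)⁻¹ * (1 + z.2 ^ 2)⁻¹) :=
          integral_mono (hI r).norm (integral_cauchy2.1.const_mul _)
            fun z => (hd r z.1 z.2).trans_eq (by ring)
      _ = _ := by rw [integral_const_mul, integral_cauchy2.2]; ring
  refine ⟨C * Real.pi ^ 2, by positivity, ?_, hI, hN, ?_, ?_⟩
  · intro r z
    refine (hd r z.1 z.2).trans ?_
    have h1 : (1 + z.1 ^ 2)⁻¹ ≤ 1 := inv_le_one_of_one_le₀ (by nlinarith [sq_nonneg z.1])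
    have h2 : (1 + z.2 ^ 2)⁻¹ ≤ 1 := inv_le_one_of_one_le₀ (by nlinarith [sq_nonneg z.2])
    calc C * ((1 + r ^ 2)⁻¹ * (1 + z.1 ^ 2)⁻¹ * (1 + z.2 ^ 2)⁻¹)
        ≤ C * ((1 + r ^ 2)⁻¹ * 1 * 1) := by gcongr
      _ ≤ C * Real.pi ^ 2 * (1 + r ^ 2)⁻¹ := by
        have : 0 ≤ C * (1 + r ^ 2)⁻¹ := by positivity
        nlinarith
  · intro r ξ η
    rw [fxy2_eq_integral (hI r)]
    refine (norm_integral_le_integral_norm _).trans ?_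
    simpa only [norm_mul, norm_exp_negI, one_mul] using hN r
  · intro ξ η
    have : ∀ r, fxy2 (fun x y => h (r, x, y)) ξ η = ∫ z : ℝ × ℝ,
        Complex.exp (-Complex.I * ((z.1 * ξ + z.2 * η : ℝ) : ℂ)) * h (r, z) :=
      fun r => fxy2_eq_integral (hI r) ξ η
    simp only [this]
    refine continuous_of_dominated (bound := fun z : ℝ × ℝ =>
      C * ((1 + z.1 ^ 2)⁻¹ * (1 + z.2 ^ 2)⁻¹)) ?_ ?_ (integral_cauchy2.1.const_mul _) ?_
    · intro r
      exact Continuous.aestronglyMeasurable (by fun_prop)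
    · intro r
      refine Filter.Eventually.of_forall fun z => ?_
      rw [norm_mul, norm_exp_negI, one_mul]
      refine (hd r z.1 z.2).trans ?_
      have h1 : (1 + r ^ 2)⁻¹ ≤ 1 := inv_le_one_of_one_le₀ (by nlinarith [sq_nonneg r])
      calc C * ((1 + r ^ 2)⁻¹ * (1 + z.1 ^ 2)⁻¹ * (1 + z.2 ^ 2)⁻¹)
        ≤ C * (1 * (1 + z.1 ^ 2)⁻¹ * (1 + z.2 ^ 2)⁻¹) := by gcongr
        _ = _ := by ring
    · refine Filter.Eventually.of_forall fun z => by fun_prop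

lemma ftt_eq_slice (w : ℝ → ℝ → ℝ → ℂ) (τ ξ η : ℝ) :
    ftt w τ ξ η = ∫ t : ℝ, Complex.exp (-Complex.I * ((t * τ : ℝ) : ℂ)) * fxy2 (w t) ξ η := by
  simp only [ftt, fxy2, ← integral_const_mul]
  congr 1; ext t; congr 1; ext x; congr 1; ext y
  rw [← mul_assoc, ← Complex.exp_add]
  congr 2
  push_cast; ring

/-- `∫ e^{irτ} ũ(τ,ξ,η) dτ = 2π û(r)(ξ,η)`. -/
lemma inversion_slice (h : 𝓢(ℝ × ℝ × ℝ, ℂ)) (ξ η r : ℝ)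
    (hg : Integrable fun τ => ftt (fun t x y => h (t, x, y)) τ ξ η) :
    ∫ τ : ℝ, Complex.exp (Complex.I * ((r * τ : ℝ) : ℂ)) *
      ftt (fun t x y => h (t, x, y)) τ ξ η = 2 * Real.pi * fxy2 (fun x y => h (r, x, y)) ξ η := by
  obtain ⟨C, hC, -, -, -, hb, hcont⟩ := slice h
  simp only [ftt_eq_slice] at hg ⊢
  refine inversion_one (hcont ξ η) ?_ hg r
  exact (integrable_inv_one_add_sq.const_mul C).mono' (hcont ξ η).aestronglyMeasurable
    (Filter.Eventually.of_forall fun r => hb r ξ η)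

/-! ### The degenerate heat average -/

/-- `∫_{r>0} ∫_ζ e^{-ζ²} h(c - r, x - 2√(r+d)ζ, y - 2√(r+d)ζ) dζ dr`: up to the factor `√π`, the
function `∫_{r>0} e^{(r+d)(∂_x+∂_y)²} h(c - r) dr`, the degenerate heat semigroup being written as
an average of translations along the diagonal. -/
def heatAvg (h : 𝓢(ℝ × ℝ × ℝ, ℂ)) (c d : ℝ) (z : ℝ × ℝ) : ℂ :=
  ∫ α : ℝ × ℝ, ((Real.exp (-α.2 ^ 2) : ℝ) : ℂ) * h (c - α.1,
    z.1 - 2 * Real.sqrt (α.1 + d) * α.2, z.2 - 2 * Real.sqrt (α.1 + d) * α.2)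
    ∂((volume.restrict (Set.Ioi 0)).prod volume)

/-- The Fourier transform of `heatAvg`: averaging the characters produced by the translations
against a Gaussian gives back the heat multiplier `e^{-(r+d)(ξ+η)²}`. -/
lemma heatAvg_spec (h : 𝓢(ℝ × ℝ × ℝ, ℂ)) (c d : ℝ) (hd : 0 ≤ d) :
    Continuous (heatAvg h c d) ∧ Integrable (heatAvg h c d) ∧
    ∀ ξ η, fxy2 (fun x y => heatAvg h c d (x, y)) ξ η = (Real.sqrt Real.pi : ℂ) *
      ∫ r in Set.Ioi (0 : ℝ), Complex.exp ((-(r + d) * (ξ + η) ^ 2 : ℝ) : ℂ) *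
        fxy2 (fun x y => h (c - r, x, y)) ξ η := by
  obtain ⟨C, hC, hsup, hint, hL1, hb, hcont⟩ := slice h
  set q : ℝ × ℝ → ℝ × ℝ → ℂ := fun α z => ((Real.exp (-α.2 ^ 2) : ℝ) : ℂ) * h (c - α.1,
    z.1 - 2 * Real.sqrt (α.1 + d) * α.2, z.2 - 2 * Real.sqrt (α.1 + d) * α.2) with hq
  set Q : ℝ × ℝ → ℝ := fun α => (C * (1 + (c - α.1) ^ 2)⁻¹) * Real.exp (-α.2 ^ 2) with hQdef
  have htr : ∀ α : ℝ × ℝ, MeasurePreserving (fun z : ℝ × ℝ =>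
      (z.1 - 2 * Real.sqrt (α.1 + d) * α.2, z.2 - 2 * Real.sqrt (α.1 + d) * α.2)) := fun α =>
    measurePreserving_sub_right volume
      ((2 * Real.sqrt (α.1 + d) * α.2, 2 * Real.sqrt (α.1 + d) * α.2) : ℝ × ℝ)
  have hemb : ∀ α : ℝ × ℝ, MeasurableEmbedding (fun z : ℝ × ℝ =>
      (z.1 - 2 * Real.sqrt (α.1 + d) * α.2, z.2 - 2 * Real.sqrt (α.1 + d) * α.2)) := fun α =>
    (MeasurableEquiv.subRight
      ((2 * Real.sqrt (α.1 + d) * α.2, 2 * Real.sqrt (α.1 + d) * α.2) : ℝ × ℝ)).measurableEmbedding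
  have hcq : Continuous (Function.uncurry q) := by
    rw [hq]; unfold Function.uncurry; fun_prop
  have hQi : Integrable Q ((volume.restrict (Set.Ioi 0)).prod volume) := by
    refine Integrable.mul_prod (f := fun r : ℝ => C * (1 + (c - r) ^ 2)⁻¹)
      (g := fun ζ : ℝ => Real.exp (-ζ ^ 2)) ?_ ?_
    · exact ((integrable_inv_one_add_sq.comp_sub_left c).const_mul C).restrict
    · simpa using integrable_exp_neg_mul_sq (b := 1) one_pos
  have hsupp := superposition (μ := (volume.restrict (Set.Ioi (0 : ℝ))).prod volume) (q := q)
    (Q := Q) hcq.aestronglyMeasurable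
    (fun z => (hcq.comp (by fun_prop : Continuous fun α : ℝ × ℝ => (α, z))).aestronglyMeasurable)
    (fun α => hcq.comp (by fun_prop : Continuous fun z : ℝ × ℝ => (α, z))) ?_ ?_ ?_ hQi
  rotate_left
  · intro α z
    simp only [hq, hQdef, norm_mul, Complex.norm_real, Real.norm_eq_abs, Real.abs_exp]
    rw [mul_comm]
    gcongr
    exact hsup _ _
  · intro α
    exact (((htr α).integrable_comp_emb (hemb α)).2 (hint (c - α.1))).const_mul _
  · intro α
    simp only [hq, hQdef, norm_mul, Complex.norm_real, Real.norm_eq_abs, Real.abs_exp]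
    rw [integral_const_mul, mul_comm,
      (htr α).integral_comp (hemb α) (fun z : ℝ × ℝ => ‖h (c - α.1, z)‖)]
    gcongr
    exact hL1 _
  refine ⟨hsupp.1, hsupp.2.1, fun ξ η => ?_⟩
  refine (hsupp.2.2 ξ η).trans ?_
  have e1 : ∀ α : ℝ × ℝ, fxy2 (fun x y => q α (x, y)) ξ η = ((Real.exp (-α.2 ^ 2) : ℝ) : ℂ) *
      Complex.exp (-Complex.I * ((2 * Real.sqrt (α.1 + d) * α.2 * (ξ + η) : ℝ) : ℂ)) *
      fxy2 (fun x y => h (c - α.1, x, y)) ξ η := by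
    intro α
    rw [mul_assoc, ← fxy2_translate (fun x y => h (c - α.1, x, y))]
    simp only [hq, fxy2, ← integral_const_mul]
    congr 1; ext x; congr 1; ext y
    ring
  simp only [e1]
  rw [integral_prod]
  · rw [← integral_const_mul]
    refine setIntegral_congr_fun measurableSet_Ioi fun r hr => ?_
    have hr' : (0 : ℝ) < r := hr
    simp only
    rw [integral_mul_const, gaussian_superposition (r + d) (ξ + η) (by linarith), mul_assoc]
  · refine hQi.mono' (Continuous.aestronglyMeasurable ?_)
      (Filter.Eventually.of_forall fun α => ?_)
    · have := (hcont ξ η).comp (by fun_prop : Continuous fun α : ℝ × ℝ => c - α.1)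
      simp only [Function.comp_def] at this
      fun_prop
    · rw [norm_mul, norm_mul, norm_exp_negI, mul_one, Complex.norm_real, Real.norm_eq_abs,
        Real.abs_exp, mul_comm]
      simp only [hQdef]
      gcongr
      exact hb _ _ _

/-- One half of `𝒦`, after writing `1/(a+iτ) = ∫_{r>0} e^{-(a+iτ)r} dr`. -/
lemma half_kernel (h : 𝓢(ℝ × ℝ × ℝ, ℂ)) (c d a ξ η : ℝ) (ha : 0 < a)
    (hg : Integrable fun τ => ftt (fun t x y => h (t, x, y)) τ ξ η) :
    ∫ τ : ℝ, Complex.exp (Complex.I * ((c * τ : ℝ) : ℂ)) * Complex.exp ((-d * a : ℝ) : ℂ) /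
      ((a : ℂ) + Complex.I * (τ : ℂ)) * ftt (fun t x y => h (t, x, y)) τ ξ η =
    2 * Real.pi * ∫ r in Set.Ioi (0 : ℝ), Complex.exp ((-(r + d) * a : ℝ) : ℂ) *
        fxy2 (fun x y => h (c - r, x, y)) ξ η := by
  set g : ℝ → ℂ := fun τ => ftt (fun t x y => h (t, x, y)) τ ξ η with hgdef
  have e1 : ∀ τ : ℝ, Complex.exp (Complex.I * ((c * τ : ℝ) : ℂ)) *
      Complex.exp ((-d * a : ℝ) : ℂ) / ((a : ℂ) + Complex.I * (τ : ℂ)) * g τ =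
      ∫ r in Set.Ioi (0 : ℝ), Complex.exp (Complex.I * (((c - r) * τ : ℝ) : ℂ)) *
        (Complex.exp ((-(r + d) * a : ℝ) : ℂ) * g τ) := by
    intro τ
    have hre : (-((a : ℂ) + Complex.I * (τ : ℂ))).re < 0 := by simp [ha]
    have h2 := integral_exp_mul_complex_Ioi hre 0
    have h3 : (1 : ℂ) / ((a : ℂ) + Complex.I * (τ : ℂ)) = ∫ r in Set.Ioi (0 : ℝ),
        Complex.exp (-((a : ℂ) + Complex.I * (τ : ℂ)) * (r : ℂ)) := by
      rw [h2, neg_div_neg_eq]; simp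
    rw [mul_div_assoc, div_eq_mul_one_div (Complex.exp ((-d * a : ℝ) : ℂ)), h3, mul_comm _ (g τ),
      ← integral_const_mul, ← integral_const_mul, ← integral_const_mul]
    refine integral_congr_ae (Filter.Eventually.of_forall fun r => ?_)
    simp only
    rw [← Complex.exp_add, ← Complex.exp_add, mul_comm (g τ), ← mul_assoc,
      ← Complex.exp_add]
    congr 2
    push_cast; ring
  change ∫ τ : ℝ, Complex.exp (Complex.I * ((c * τ : ℝ) : ℂ)) * Complex.exp ((-d * a : ℝ) : ℂ) /
      ((a : ℂ) + Complex.I * (τ : ℂ)) * g τ = _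
  simp only [e1]
  rw [integral_integral_swap]
  · rw [← integral_const_mul]
    refine integral_congr_ae (Filter.Eventually.of_forall fun r => ?_)
    simp only
    have := inversion_slice h ξ η (c - r) hg
    rw [mul_left_comm, ← this, ← integral_const_mul]
    refine integral_congr_ae (Filter.Eventually.of_forall fun τ => ?_)
    simp only [hgdef]
    ring
  · have hexp : Integrable (fun r : ℝ => Complex.exp ((-(r + d) * a : ℝ) : ℂ))
        (volume.restrict (Set.Ioi 0)) := by
      have h0 : IntegrableOn (fun r : ℝ => Real.exp (-a * r)) (Set.Ioi 0) :=
        integrableOn_exp_mul_Ioi (by linarith) 0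
      have h1 := (h0.const_mul (Real.exp (-d * a))).ofReal (𝕜 := ℂ)
      refine h1.congr (Filter.Eventually.of_forall fun r => ?_)
      simp only
      rw [← Real.exp_add]
      refine (Complex.ofReal_exp _).trans ?_
      congr 2
      ring
    have hp := hg.mul_prod hexp
    refine (hp.bdd_mul (c := 1) (f := fun p : ℝ × ℝ =>
      Complex.exp (Complex.I * (((c - p.2) * p.1 : ℝ) : ℂ)))
      (Continuous.aestronglyMeasurable (by fun_prop))
      (Filter.Eventually.of_forall fun p => (norm_exp_posI _).le)).congr ?_
    refine Filter.Eventually.of_forall fun p => ?_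
    simp only [Function.uncurry, hgdef]
    ring

/-! ### The spatial Fourier transform of `ℒF(t)` -/

lemma ae_diag : ∀ᵐ z : ℝ × ℝ, z.1 + z.2 ≠ 0 := by
  rw [ae_iff, Measure.volume_eq_prod]
  have hms : MeasurableSet {z : ℝ × ℝ | ¬ z.1 + z.2 ≠ 0} := by
    simp only [not_not]
    exact measurableSet_eq_fun (by fun_prop) measurable_const
  rw [Measure.measure_prod_null hms]
  refine Filter.Eventually.of_forall fun x => ?_
  have : Prod.mk x ⁻¹' {z : ℝ × ℝ | ¬ z.1 + z.2 ≠ 0} ⊆ {-x} := by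
    intro y hy
    simp only [Set.mem_preimage, Set.mem_ofPred_eq, not_not] at hy
    simp only [Set.mem_singleton_iff]
    linarith
  exact measure_mono_null this (by simp)

/-- The multiplier in `𝒦` has no singularity: it is bounded by `|t|`, uniformly in `a` and `τ`. -/
lemma kernel_norm_le (a τ t : ℝ) (ha : 0 < a) :
    ‖(Complex.exp (Complex.I * ((t * τ : ℝ) : ℂ)) - Complex.exp ((-|t| * a : ℝ) : ℂ)) /
      ((a : ℂ) + Complex.I * (τ : ℂ))‖ ≤ |t| := by
  have hne : (a : ℂ) + Complex.I * (τ : ℂ) ≠ 0 := fun h => by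
    have := congrArg Complex.re h
    simp at this
    linarith
  rw [norm_div, div_le_iff₀ (norm_pos_iff.2 hne)]
  exact norm_exp_sub_le a τ t ha.le

/-- `ℒF(t)` genuinely has spatial Fourier transform `(2π)² e^{it(ξ³+η³)} 𝒦F(t)` off the line
`ξ + η = 0`: the function `e^{it(ξ³+η³)} 𝒦F(t)` is integrable and is the Fourier transform of a
continuous integrable function, so Fourier inversion applies. -/
lemma fxy2_Lop (F : 𝓢(ℝ × ℝ × ℝ, ℂ)) (t ξ η : ℝ) (hne : ξ + η ≠ 0) :
    fxy2 (Lop (fun t x y => F (t, x, y)) t) ξ η = (2 * Real.pi) ^ 2 *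
      (Complex.exp (Complex.I * ((t * (ξ ^ 3 + η ^ 3) : ℝ) : ℂ)) *
        Kop (fun t x y => F (t, x, y)) t ξ η) := by
  obtain ⟨u, hu⟩ := exists_ftt F
  obtain ⟨f, hf⟩ := exists_sheared u t
  obtain ⟨h, hh⟩ := exists_ftt_eq f
  obtain ⟨C, hC, hd⟩ := schwartz_decay f
  have hfi : ∀ ξ η, Integrable fun τ => f (τ, ξ, η) := by
    intro ξ η
    refine (integrable_inv_one_add_sq.const_mul (C * ((1 + ξ ^ 2)⁻¹ * (1 + η ^ 2)⁻¹))).mono'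
      (Continuous.aestronglyMeasurable (by fun_prop)) (Filter.Eventually.of_forall fun τ => ?_)
    exact (hd τ ξ η).trans_eq (by ring)
  have hg : ∀ ξ η, Integrable fun τ => ftt (fun t x y => h (t, x, y)) τ ξ η := by
    intro ξ η
    simp only [hh]
    exact hfi ξ η
  -- `e^{it(ξ³+η³)} 𝒦F(t)` in terms of `f`
  have hK : ∀ ξ η, Complex.exp (Complex.I * ((t * (ξ ^ 3 + η ^ 3) : ℝ) : ℂ)) *
      Kop (fun t x y => F (t, x, y)) t ξ η =
      ∫ τ : ℝ, (Complex.exp (Complex.I * ((t * τ : ℝ) : ℂ)) -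
        Complex.exp (((-|t| * (ξ + η) ^ 2 : ℝ) : ℂ))) /
        ((((ξ + η) ^ 2 : ℝ) : ℂ) + Complex.I * (τ : ℂ)) * f (τ, ξ, η) := by
    intro ξ η
    rw [Kop, ← integral_const_mul]
    refine integral_congr_ae (Filter.Eventually.of_forall fun τ => ?_)
    simp only [hf, hu]
    ring
  have hKb : ∀ ξ η, ξ + η ≠ 0 →
      ‖Complex.exp (Complex.I * ((t * (ξ ^ 3 + η ^ 3) : ℝ) : ℂ)) *
        Kop (fun t x y => F (t, x, y)) t ξ η‖ ≤
      (|t| * C * Real.pi) * ((1 + ξ ^ 2)⁻¹ * (1 + η ^ 2)⁻¹) := by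
    intro ξ η hn
    have ha : 0 < (ξ + η) ^ 2 := by positivity
    rw [hK]
    refine (norm_integral_le_of_norm_le (g := fun τ : ℝ =>
      |t| * (C * ((1 + ξ ^ 2)⁻¹ * (1 + η ^ 2)⁻¹)) * (1 + τ ^ 2)⁻¹)
      (integrable_inv_one_add_sq.const_mul _) (Filter.Eventually.of_forall fun τ => ?_)).trans_eq ?_
    · rw [norm_mul, mul_assoc]
      refine mul_le_mul (kernel_norm_le _ τ t ha) ((hd τ ξ η).trans_eq (by ring))
        (norm_nonneg _) (abs_nonneg _)
    · rw [integral_const_mul, integral_univ_inv_one_add_sq]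
      ring
  obtain ⟨c1, i1, s1⟩ := heatAvg_spec h t 0 le_rfl
  obtain ⟨c2, i2, s2⟩ := heatAvg_spec h 0 |t| (abs_nonneg t)
  -- the function whose Fourier transform is `e^{it(ξ³+η³)} 𝒦F(t)`
  set H : ℝ × ℝ → ℂ := fun z =>
    (2 * Real.sqrt Real.pi : ℂ) * (heatAvg h t 0 z - heatAvg h 0 |t| z) with hH
  have hHc : Continuous H := continuous_const.mul (c1.sub c2)
  have hHi : Integrable H := (i1.sub i2).const_mul _
  have hHf : ∀ ξ η, ξ + η ≠ 0 → fxy2 (fun x y => H (x, y)) ξ η =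
      Complex.exp (Complex.I * ((t * (ξ ^ 3 + η ^ 3) : ℝ) : ℂ)) *
        Kop (fun t x y => F (t, x, y)) t ξ η := by
    intro ξ η hn
    have ha : 0 < (ξ + η) ^ 2 := by positivity
    have hsplit : fxy2 (fun x y => H (x, y)) ξ η = (2 * Real.sqrt Real.pi : ℂ) *
        (fxy2 (fun x y => heatAvg h t 0 (x, y)) ξ η -
          fxy2 (fun x y => heatAvg h 0 |t| (x, y)) ξ η) := by
      have hex : ∀ {G : ℝ × ℝ → ℂ}, Integrable G → Integrable fun z : ℝ × ℝ =>
          Complex.exp (-Complex.I * ((z.1 * ξ + z.2 * η : ℝ) : ℂ)) * G z := fun hG =>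
        hG.bdd_mul (c := 1) (Continuous.aestronglyMeasurable (by fun_prop))
          (Filter.Eventually.of_forall fun v => (norm_exp_negI _).le)
      rw [fxy2_eq_integral hHi, fxy2_eq_integral i1, fxy2_eq_integral i2,
        ← integral_sub (hex i1) (hex i2), ← integral_const_mul]
      refine integral_congr_ae (Filter.Eventually.of_forall fun z => ?_)
      simp only [hH]
      ring
    have hpi : (Real.sqrt Real.pi : ℂ) * (Real.sqrt Real.pi : ℂ) = Real.pi := by
      rw [← Complex.ofReal_mul, Real.mul_self_sqrt Real.pi_pos.le]
    have k1 := half_kernel h t 0 ((ξ + η) ^ 2) ξ η ha (hg ξ η)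
    have k2 := half_kernel h 0 |t| ((ξ + η) ^ 2) ξ η ha (hg ξ η)
    rw [hsplit, s1, s2, ← mul_sub, ← mul_assoc, mul_assoc 2, hpi, mul_sub, ← k1, ← k2, hK]
    have hhalf : ∀ c d : ℝ, Integrable fun τ : ℝ => Complex.exp (Complex.I * ((c * τ : ℝ) : ℂ)) *
        Complex.exp ((-d * (ξ + η) ^ 2 : ℝ) : ℂ) /
        ((((ξ + η) ^ 2 : ℝ) : ℂ) + Complex.I * (τ : ℂ)) *
        ftt (fun t x y => h (t, x, y)) τ ξ η := by
      intro c d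
      refine (hg ξ η).bdd_mul (c := Real.exp (-d * (ξ + η) ^ 2) / (ξ + η) ^ 2)
        (Measurable.aestronglyMeasurable (by fun_prop)) (Filter.Eventually.of_forall fun τ => ?_)
      rw [norm_div, norm_mul, norm_exp_posI, one_mul, Complex.norm_exp, Complex.ofReal_re]
      have : (ξ + η) ^ 2 ≤ ‖(((ξ + η) ^ 2 : ℝ) : ℂ) + Complex.I * (τ : ℂ)‖ := by
        refine le_trans ?_ (Complex.re_le_norm _)
        rw [Complex.add_re, Complex.ofReal_re]
        simp
      gcongr
    rw [← integral_sub (hhalf _ _) (hhalf _ _)]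
    refine integral_congr_ae (Filter.Eventually.of_forall fun τ => ?_)
    simp only [hh]
    simp
    ring
  have hHcont : Continuous fun z : ℝ × ℝ => fxy2 (fun x y => H (x, y)) z.1 z.2 := by
    simp only [fxy2_eq_integral hHi]
    refine continuous_of_dominated (bound := fun z => ‖H z‖) ?_ ?_ hHi.norm ?_
    · intro z
      exact Continuous.aestronglyMeasurable (by fun_prop)
    · intro z
      refine Filter.Eventually.of_forall fun w => ?_
      rw [norm_mul, norm_exp_negI, one_mul]
    · exact Filter.Eventually.of_forall fun w => by fun_prop
  have hk : Integrable fun z : ℝ × ℝ => fxy2 (fun x y => H (x, y)) z.1 z.2 := by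
    refine (integral_cauchy2.1.const_mul (|t| * C * Real.pi)).mono' hHcont.aestronglyMeasurable ?_
    filter_upwards [ae_diag] with z hz
    rw [hHf _ _ hz]
    exact hKb _ _ hz
  have hLop : ∀ x y, Lop (fun t x y => F (t, x, y)) t x y = (2 * Real.pi) ^ 2 * H (x, y) := by
    intro x y
    rw [← inversion_two hHc hHi hk, Lop]
    congr 1; ext ξ
    refine integral_congr_ae ?_
    have hae : ∀ᵐ η : ℝ, η ≠ -ξ := by simp [ae_iff]
    filter_upwards [hae] with η hη
    rw [hHf ξ η (fun h0 => hη (by linarith)), ← mul_assoc, ← Complex.exp_add]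
    congr 2
    push_cast; ring
  have : Lop (fun t x y => F (t, x, y)) t = fun x y => (2 * Real.pi : ℂ) ^ 2 * H (x, y) := by
    ext x y
    exact hLop x y
  rw [this, ← hHf ξ η hne]
  simp only [fxy2, ← integral_const_mul]
  congr 1; ext x; congr 1; ext y
  ring

/-! ### The pointwise bound and the conclusion -/

lemma measurable_ftt (F : 𝓢(ℝ × ℝ × ℝ, ℂ)) :
    Measurable fun v : ℝ × ℝ × ℝ => ftt (fun t x y => F (t, x, y)) v.1 v.2.1 v.2.2 := by
  obtain ⟨u, hu⟩ := exists_ftt F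
  simp only [← hu]
  exact u.continuous.measurable

/-- Pointwise bound of the Fourier transform of `ψ ℒF` by the kernel majorant. -/
lemma enorm_ftt_le {B : ℝ} {ψ ψ' ψ'' : ℝ → ℝ} (h : IsCutoff B ψ ψ' ψ'')
    (F : 𝓢(ℝ × ℝ × ℝ, ℂ)) (σ ξ η : ℝ) (hne : ξ + η ≠ 0) :
    ‖ftt (fun t x y => (ψ t : ℂ) * Lop (fun t x y => F (t, x, y)) t x y)
        (σ + ξ ^ 3 + η ^ 3) ξ η‖ₑ ≤
      ENNReal.ofReal ((2 * Real.pi) ^ 2 * (1000 * B)) *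
        ∫⁻ τ, ENNReal.ofReal (kerMaj ((ξ + η) ^ 2) σ τ) *
          ‖ftt (fun t x y => F (t, x, y)) (τ + ξ ^ 3 + η ^ 3) ξ η‖ₑ := by
  have hB : 0 ≤ B := (abs_nonneg _).trans (h.b0 0)
  have ha : 0 < (ξ + η) ^ 2 := by positivity
  obtain ⟨u, hu⟩ := exists_ftt F
  obtain ⟨f, hf⟩ := exists_sheared u 0
  set g : ℝ → ℂ := fun τ => ftt (fun t x y => F (t, x, y)) (τ + ξ ^ 3 + η ^ 3) ξ η with hgdef
  have hgf : ∀ τ, g τ = f (τ, ξ, η) := by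
    intro τ
    rw [hf, hu]
    simp [hgdef]
  have hgc : Continuous g := by
    rw [funext hgf]; fun_prop
  have hgi : Integrable g := by
    obtain ⟨C, hC, hd⟩ := schwartz_decay f
    refine (integrable_inv_one_add_sq.const_mul (C * ((1 + ξ ^ 2)⁻¹ * (1 + η ^ 2)⁻¹))).mono'
      hgc.aestronglyMeasurable (Filter.Eventually.of_forall fun τ => ?_)
    rw [hgf]
    exact (hd τ ξ η).trans_eq (by ring)
  set k : ℝ → ℝ → ℂ := fun t τ => (Complex.exp (Complex.I * ((t * τ : ℝ) : ℂ)) -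
    Complex.exp (((-|t| * (ξ + η) ^ 2 : ℝ) : ℂ))) /
      ((((ξ + η) ^ 2 : ℝ) : ℂ) + Complex.I * (τ : ℂ)) with hk
  have hψc := h.continuous
  have hψi : Integrable fun t => ψ t * t := by
    refine (hψc.mul continuous_id).integrable_of_hasCompactSupport ?_
    refine HasCompactSupport.of_support_subset_isCompact (isCompact_Icc (a := (-3 : ℝ)) (b := 3)) ?_
    intro t ht
    by_contra hcon
    refine ht ?_
    have : 3 ≤ |t| := by
      by_contra h3
      exact hcon (abs_le.1 (not_le.1 h3).le)
    simp [h.z0 t this]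
  have hprod : Integrable (Function.uncurry fun t τ : ℝ =>
      Complex.exp (-Complex.I * ((t * σ : ℝ) : ℂ)) * ((ψ t : ℂ) * k t τ) * g τ)
      (volume.prod volume) := by
    refine (hψi.norm.mul_prod hgi.norm).mono' ?_ (Filter.Eventually.of_forall fun p => ?_)
    · refine Measurable.aestronglyMeasurable ?_
      have hgm := hgc.measurable
      have hψm := hψc.measurable
      simp only [Function.uncurry_def, hk]
      fun_prop
    · simp only [Function.uncurry]
      rw [norm_mul, norm_mul, norm_exp_negI, one_mul, norm_mul, norm_mul, Complex.norm_real]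
      gcongr
      exact kernel_norm_le _ _ _ ha
  -- Fubini's theorem exhibits `k_a(σ,τ)` as the time Fourier transform of `ψ` times the multiplier
  have hmain : ftt (fun t x y => (ψ t : ℂ) * Lop (fun t x y => F (t, x, y)) t x y)
        (σ + ξ ^ 3 + η ^ 3) ξ η = ((2 * Real.pi) ^ 2 : ℂ) * ∫ τ : ℝ,
          (∫ t : ℝ, Complex.exp (-Complex.I * ((t * σ : ℝ) : ℂ)) * ((ψ t : ℂ) * k t τ)) * g τ := by
    simp only [← integral_mul_const]
    rw [← integral_integral_swap hprod, ftt_eq_slice, ← integral_const_mul]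
    refine integral_congr_ae (Filter.Eventually.of_forall fun t => ?_)
    have e1 : fxy2 (fun x y => (ψ t : ℂ) * Lop (fun t x y => F (t, x, y)) t x y) ξ η =
        (ψ t : ℂ) * fxy2 (Lop (fun t x y => F (t, x, y)) t) ξ η := by
      simp only [fxy2, ← integral_const_mul]
      congr 1; ext x; congr 1; ext y
      ring
    have e2 : ∫ τ : ℝ, Complex.exp (-Complex.I * ((t * σ : ℝ) : ℂ)) * ((ψ t : ℂ) * k t τ) * g τ =
        Complex.exp (-Complex.I * ((t * σ : ℝ) : ℂ)) * (ψ t : ℂ) *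
          Kop (fun t x y => F (t, x, y)) t ξ η := by
      rw [Kop, ← integral_const_mul]
      refine integral_congr_ae (Filter.Eventually.of_forall fun τ => ?_)
      simp only [hk, hgdef]
      ring
    have e3 : Complex.exp (-Complex.I * ((t * σ : ℝ) : ℂ)) =
        Complex.exp (-Complex.I * ((t * (σ + ξ ^ 3 + η ^ 3) : ℝ) : ℂ)) *
        Complex.exp (Complex.I * ((t * (ξ ^ 3 + η ^ 3) : ℝ) : ℂ)) := by
      rw [← Complex.exp_add]
      congr 1
      push_cast; ring
    simp only
    rw [e1, e2, fxy2_Lop F t ξ η hne, e3]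
    ring
  rw [hmain, enorm_mul, ENNReal.ofReal_mul (by positivity), mul_assoc]
  have hpi : ‖((2 * Real.pi) ^ 2 : ℂ)‖ₑ = ENNReal.ofReal ((2 * Real.pi) ^ 2) := by
    rw [← ofReal_norm]
    congr 1
    simp [abs_of_pos Real.pi_pos]
  rw [hpi]
  gcongr
  refine (enorm_integral_le_lintegral_enorm _).trans ?_
  rw [← lintegral_const_mul' _ _ ENNReal.ofReal_ne_top]
  refine lintegral_mono fun τ => ?_
  simp only
  rw [enorm_mul, ← mul_assoc, ← ENNReal.ofReal_mul (by positivity)]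
  gcongr
  rw [← ofReal_norm]
  exact ENNReal.ofReal_le_ofReal (kernel_bound h _ τ σ ha)

/-- Duhamel estimate: `‖ψ(t) ℒF(t)‖_{X^{s,1/2,1}} ≤ C ‖F‖_{X^{s,-1/2,1}}`. -/
theorem duhamel_estimate (s : ℝ)
    (χ : ℝ → ℝ) (hχ_smooth : ContDiff ℝ (⊤ : ℕ∞) χ) (hχ_even : ∀ t, χ (-t) = χ t)
    (hχ_nonneg : ∀ t, 0 ≤ χ t) (hχ_le_one : ∀ t, χ t ≤ 1)
    (hχ_supp : Function.support χ ⊆ Set.Ioo (-2) 2)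
    (hχ_one : ∀ t ∈ Set.Icc (-1 : ℝ) 1, χ t = 1)
    (ψ : ℝ → ℝ) (hψ_smooth : ContDiff ℝ (⊤ : ℕ∞) ψ)
    (hψ_supp : Function.support ψ ⊆ Set.Icc (-2) 2)
    (hψ_one : ∀ t ∈ Set.Icc (-1 : ℝ) 1, ψ t = 1) :
    ∃ C : ℝ, 0 < C ∧
      ∀ F : SchwartzMap (ℝ × ℝ × ℝ) ℂ,
        Xnorm χ s (1 / 2)
            (fun t x y => (ψ t : ℂ) * Lop (fun t' x' y' => F (t', x', y')) t x y) ≤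
          ENNReal.ofReal C * Xnorm χ s (-(1 / 2)) (fun t x y => F (t, x, y)) := by
  obtain ⟨B, ψ', ψ'', h⟩ := exists_isCutoff ψ hψ_smooth hψ_supp
  set K : ℝ≥0∞ := ENNReal.ofReal ((2 * Real.pi) ^ 2 * (1000 * B)) *
    (ENNReal.ofReal 2304 * geomQ) with hK
  have hKt : K ≠ ⊤ := ENNReal.mul_ne_top ENNReal.ofReal_ne_top
    (ENNReal.mul_ne_top ENNReal.ofReal_ne_top geomQ_lt_top.ne)
  refine ⟨K.toReal + 1, by positivity, fun F => ?_⟩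
  refine (Xnorm_le s χ hχ_smooth.continuous hχ_nonneg hχ_le_one hχ_supp hχ_one _
    (fun t x y => F (t, x, y)) (ENNReal.ofReal ((2 * Real.pi) ^ 2 * (1000 * B)))
    (measurable_ftt F) (fun σ ξ η hne => enorm_ftt_le h F σ ξ η hne)).trans ?_
  rw [← hK]
  gcongr
  rw [ENNReal.le_ofReal_iff_toReal_le hKt (by positivity)]
  linarith
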